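/- (B, Δ, ε, S) is a semisimple weak Hopf algebra over k. Consequently A, endowed with the comultiplication, counit, and antipode dual to the multiplication, unit, and antipode of B via the pairing ⟨·,·⟩, is a semisimple weak Hopf algebra isomorphic to the dual weak Hopf algebra of B. -/

import Mathlib

open scoped TensorProduct
open TensorProduct

/-- A symmetric Markov extension `N ⊆ M` of `k`-algebras satisfying the symmetric
product and weak irreducibility assumptions, together with its Jones tower
`N ⊆ M ⊆ M₁ ⊆ M₂` (the ambient algebra `R` plays the role of `M₂`), the
normalized trace `T = T₂` and the depth two conditions. -/
structure D2 (k : Type*) [Field k] (R : Type*) [Ring R] [Algebra k R] where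
  N : Subalgebra k R
  M : Subalgebra k R
  M1 : Subalgebra k R
  hNM : N ≤ M
  hMM1 : M ≤ M1
  E : R →ₗ[k] R
  EM : R →ₗ[k] R
  EM1 : R →ₗ[k] R
  lam : k
  lam_ne : lam ≠ 0
  e1 : R
  e2 : R
  T : R →ₗ[k] k
  -- Markov extension data for E : M → N
  nE : ℕ
  xb : Fin nE → R
  yb : Fin nE → R
  hxb : ∀ i, xb i ∈ M
  hyb : ∀ i, yb i ∈ M
  hE_mem : ∀ x ∈ M, E x ∈ N
  hE_one : E 1 = 1
  hE_left : ∀ n ∈ N, ∀ x ∈ M, E (n * x) = n * E x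
  hE_right : ∀ n ∈ N, ∀ x ∈ M, E (x * n) = E x * n
  hdual1 : ∀ m ∈ M, ∑ i, E (m * xb i) * yb i = m
  hdual2 : ∀ m ∈ M, ∑ i, xb i * E (yb i * m) = m
  hindex : ∑ i, xb i * yb i = lam⁻¹ • (1 : R)
  hindex' : ∑ i, yb i * xb i = lam⁻¹ • (1 : R)
  -- the normalized trace (T₂ on M₂ = R; it restricts to T on N, T₀ on M, T₁ on M₁)
  hT_one : T 1 = 1
  hT_tr : ∀ x y : R, T (x * y) = T (y * x)
  hTE : ∀ x ∈ M, T (E x) = T x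
  hTEM : ∀ x ∈ M1, T (EM x) = T x
  hTEM1 : ∀ x : R, T (EM1 x) = T x
  -- symmetry of the Markov extension: E u = u E for all u ∈ U = C_M(N)
  hsymm : ∀ u ∈ M, (∀ y ∈ N, u * y = y * u) → ∀ x ∈ M, E (u * x) = E (x * u)
  -- the basic construction M₁ = M e₁ M
  he1_mem : e1 ∈ M1
  he1_idem : e1 * e1 = e1
  he1_N : ∀ y ∈ N, e1 * y = y * e1
  hM1_gen : M1.toSubmodule = Submodule.span k {z : R | ∃ m ∈ M, ∃ m' ∈ M, z = m * e1 * m'}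
  hEM_mem : ∀ x ∈ M1, EM x ∈ M
  hEM_one : EM 1 = 1
  hEM_left : ∀ m ∈ M, ∀ x ∈ M1, EM (m * x) = m * EM x
  hEM_right : ∀ m ∈ M, ∀ x ∈ M1, EM (x * m) = EM x * m
  hEM_e1 : ∀ m ∈ M, ∀ m' ∈ M, EM (m * e1 * m') = lam • (m * m')
  he1_jones : ∀ x ∈ M, e1 * x * e1 = e1 * E x
  he1_jones' : ∀ x ∈ M, e1 * E x = E x * e1
  -- the iterated basic construction M₂ = M₁ e₂ M₁ (M₂ = R is the ambient algebra)
  he2_idem : e2 * e2 = e2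
  he2_M : ∀ m ∈ M, e2 * m = m * e2
  hM2_gen : (⊤ : Submodule k R) = Submodule.span k {z : R | ∃ x ∈ M1, ∃ y ∈ M1, z = x * e2 * y}
  hEM1_mem : ∀ x : R, EM1 x ∈ M1
  hEM1_one : EM1 1 = 1
  hEM1_left : ∀ m ∈ M1, ∀ x : R, EM1 (m * x) = m * EM1 x
  hEM1_right : ∀ m ∈ M1, ∀ x : R, EM1 (x * m) = EM1 x * m
  hEM1_e2 : ∀ x ∈ M1, ∀ y ∈ M1, EM1 (x * e2 * y) = lam • (x * y)
  he2_jones : ∀ x ∈ M1, e2 * x * e2 = e2 * EM x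
  he2_jones' : ∀ x ∈ M1, e2 * EM x = EM x * e2
  -- braid-like relations and Pimsner-Popa relations
  hbraid1 : e1 * e2 * e1 = lam • e1
  hbraid2 : e2 * e1 * e2 = lam • e2
  hPP1 : ∀ x ∈ M1, x * e1 = lam⁻¹ • (EM (x * e1) * e1)
  hPP1' : ∀ x ∈ M1, e1 * x = lam⁻¹ • (e1 * EM (e1 * x))
  hPP2 : ∀ x : R, x * e2 = lam⁻¹ • (EM1 (x * e2) * e2)
  hPP2' : ∀ x : R, e2 * x = lam⁻¹ • (e2 * EM1 (e2 * x))
  -- weak irreducibility: U = C_M(N) is Kanzaki separable with symmetric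
  -- separability element ∑ sp i ⊗ sq i, and T₀ = T|U is non-degenerate on U
  nS : ℕ
  sp : Fin nS → R
  sq : Fin nS → R
  hsp : ∀ i, sp i ∈ M ∧ ∀ y ∈ N, sp i * y = y * sp i
  hsq : ∀ i, sq i ∈ M ∧ ∀ y ∈ N, sq i * y = y * sq i
  hsep_one : ∑ i, sp i * sq i = 1
  hsep_cas : ∀ u ∈ M, (∀ y ∈ N, u * y = y * u) →
      ∑ i, (u * sp i) ⊗ₜ[k] sq i = ∑ i, sp i ⊗ₜ[k] (sq i * u)
  hsep_symm : ∑ i, sp i ⊗ₜ[k] sq i = ∑ i, sq i ⊗ₜ[k] sp i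
  hU_nondeg : ∀ u ∈ M, (∀ y ∈ N, u * y = y * u) →
      (∀ u' ∈ M, (∀ y ∈ N, u' * y = y * u') → T (u * u') = 0) → u = 0
  -- depth two conditions
  nA : ℕ
  zb : Fin nA → R
  wb : Fin nA → R
  hzb : ∀ j, zb j ∈ M1 ∧ ∀ y ∈ N, zb j * y = y * zb j
  hwb : ∀ j, wb j ∈ M1 ∧ ∀ y ∈ N, wb j * y = y * wb j
  hdualA1 : ∀ x ∈ M1, ∑ j, EM (x * zb j) * wb j = x
  hdualA2 : ∀ x ∈ M1, ∑ j, zb j * EM (wb j * x) = x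
  nB : ℕ
  ub : Fin nB → R
  vb : Fin nB → R
  hub : ∀ i, ∀ y ∈ M, ub i * y = y * ub i
  hvb : ∀ i, ∀ y ∈ M, vb i * y = y * vb i
  hdualB1 : ∀ x : R, ∑ i, EM1 (x * ub i) * vb i = x
  hdualB2 : ∀ x : R, ∑ i, ub i * EM1 (vb i * x) = x

namespace D2

variable {k : Type*} [Field k] {R : Type*} [Ring R] [Algebra k R]

/-- `U = C_M(N)`. -/
def U (D : D2 k R) : Subalgebra k R := D.M ⊓ Subalgebra.centralizer k (D.N : Set R)

/-- `V = C_{M₁}(M)`. -/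
def V (D : D2 k R) : Subalgebra k R := D.M1 ⊓ Subalgebra.centralizer k (D.M : Set R)

/-- `W = C_{M₂}(M₁)`. -/
def W (D : D2 k R) : Subalgebra k R := Subalgebra.centralizer k (D.M1 : Set R)

/-- `A = C_{M₁}(N)`. -/
def A (D : D2 k R) : Subalgebra k R := D.M1 ⊓ Subalgebra.centralizer k (D.N : Set R)

/-- `B = C_{M₂}(M)`. -/
def B (D : D2 k R) : Subalgebra k R := Subalgebra.centralizer k (D.M : Set R)

/-- `C = C_{M₂}(N)`. -/
def C (D : D2 k R) : Subalgebra k R := Subalgebra.centralizer k (D.N : Set R)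

end D2
/-- Extension of the depth two setting by the symmetric separability element
`f = ∑ f1 i ⊗ f2 i` of `V = C_{M₁}(M)` and the invertible central element `w` of `V`
such that `f⁽¹⁾ ⊗ w f⁽²⁾` is the dual bases tensor of the trace `T` on `V`. -/
structure D2S (k : Type*) [Field k] (R : Type*) [Ring R] [Algebra k R] extends D2 k R where
  nV : ℕ
  f1 : Fin nV → R
  f2 : Fin nV → R
  hf1 : ∀ i, f1 i ∈ M1 ∧ ∀ y ∈ M, f1 i * y = y * f1 i
  hf2 : ∀ i, f2 i ∈ M1 ∧ ∀ y ∈ M, f2 i * y = y * f2 i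
  hf_one : ∑ i, f1 i * f2 i = 1
  hf_cas : ∀ v ∈ M1, (∀ y ∈ M, v * y = y * v) →
      ∑ i, (v * f1 i) ⊗ₜ[k] f2 i = ∑ i, f1 i ⊗ₜ[k] (f2 i * v)
  hf_symm : ∑ i, f1 i ⊗ₜ[k] f2 i = ∑ i, f2 i ⊗ₜ[k] f1 i
  w : R
  winv : R
  hw_mem : w ∈ M1 ∧ ∀ y ∈ M, w * y = y * w
  hwinv_mem : winv ∈ M1 ∧ ∀ y ∈ M, winv * y = y * winv
  hw_inv : w * winv = 1 ∧ winv * w = 1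
  hw_central : ∀ v ∈ M1, (∀ y ∈ M, v * y = y * v) → w * v = v * w
  hw_def : w * (∑ i, T (f2 i) • f1 i) = 1
  hw_dual : ∀ v ∈ M1, (∀ y ∈ M, v * y = y * v) → ∑ i, T (v * (w * f2 i)) • f1 i = v
/-- Extension of the depth two setting by the comultiplication `Δ`, the counit
(given by `ε(b) = ⟨1, b⟩`) and the antipode `S` on `B = C_{M₂}(M)`, characterized
through the non-degenerate pairing `⟨a, b⟩ = λ⁻² T(a e₂ e₁ w b)` of `A` and `B`. -/
structure D2H (k : Type*) [Field k] (R : Type*) [Ring R] [Algebra k R] extends D2S k R where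
  Δ : R →ₗ[k] R ⊗[k] R
  S : R →ₗ[k] R
  hΔ_mem : ∀ b, (∀ y ∈ M, b * y = y * b) →
      Δ b ∈ Submodule.span k {z : R ⊗[k] R |
        ∃ b1, (∀ y ∈ M, b1 * y = y * b1) ∧ ∃ b2, (∀ y ∈ M, b2 * y = y * b2) ∧
          z = b1 ⊗ₜ[k] b2}
  hΔ_def : ∀ a1 ∈ M1, (∀ y ∈ N, a1 * y = y * a1) →
    ∀ a2 ∈ M1, (∀ y ∈ N, a2 * y = y * a2) →
    ∀ b, (∀ y ∈ M, b * y = y * b) →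
    ∀ (m : ℕ) (b1 b2 : Fin m → R), Δ b = ∑ i, b1 i ⊗ₜ[k] b2 i →
      ∑ i, (lam⁻¹ ^ 2 * T (a1 * e2 * e1 * w * b1 i)) *
          (lam⁻¹ ^ 2 * T (a2 * e2 * e1 * w * b2 i))
        = lam⁻¹ ^ 2 * T (a1 * a2 * e2 * e1 * w * b)
  hS_mem : ∀ b, (∀ y ∈ M, b * y = y * b) → ∀ y ∈ M, S b * y = y * S b
  hS_bijOn : Set.BijOn S {b : R | ∀ y ∈ M, b * y = y * b} {b : R | ∀ y ∈ M, b * y = y * b}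
  hS_def : ∀ a ∈ M1, (∀ y ∈ N, a * y = y * a) →
    ∀ b, (∀ y ∈ M, b * y = y * b) →
      lam⁻¹ ^ 2 * T (a * e2 * e1 * w * b) = lam⁻¹ ^ 2 * T (S b * e1 * e2 * w * a)

namespace D2H

variable {k : Type*} [Field k] {R : Type*} [Ring R] [Algebra k R]

/-- The duality pairing `⟨a, b⟩ = λ⁻² T(a e₂ e₁ w b)`. -/
def pr (D : D2H k R) (a b : R) : k := D.lam⁻¹ ^ 2 * D.T (a * D.e2 * D.e1 * D.w * b)

/-- The counit `ε(b) = ⟨1, b⟩`. -/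
def eps (D : D2H k R) (b : R) : k := D.pr 1 b

end D2H

open D2 D2H

/-- The axioms of a weak Hopf algebra over `k`, for a subalgebra `H` of an ambient
algebra `R` endowed with a comultiplication `Δ`, a counit `ε` and an antipode `S`
(all given as maps defined on the ambient algebra); Sweedler sums are expressed
through arbitrary finite representations of the relevant comultiplications. -/
def IsWeakHopfOn (k : Type*) [Field k] (R : Type*) [Ring R] [Algebra k R]
    (H : Subalgebra k R) (Δ : R →ₗ[k] R ⊗[k] R) (ε : R →ₗ[k] k) (S : R →ₗ[k] R) :
    Prop :=
  -- Δ maps H into H ⊗ H and S maps H into H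
  (∀ h ∈ H, Δ h ∈ Submodule.span k
      {z : R ⊗[k] R | ∃ x ∈ H, ∃ y ∈ H, z = x ⊗ₜ[k] y}) ∧
  (∀ h ∈ H, S h ∈ H) ∧
  -- (H, Δ, ε) is a coalgebra: coassociativity and the counit axioms
  (∀ h ∈ H, TensorProduct.map Δ LinearMap.id (Δ h)
      = (TensorProduct.assoc k R R R).symm (TensorProduct.map LinearMap.id Δ (Δ h))) ∧
  (∀ h ∈ H, ∀ (m : ℕ) (h1 h2 : Fin m → R), Δ h = ∑ i, h1 i ⊗ₜ[k] h2 i →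
      (∑ i, ε (h1 i) • h2 i = h) ∧ (∑ i, ε (h2 i) • h1 i = h)) ∧
  -- Δ is multiplicative
  (∀ h ∈ H, ∀ g ∈ H, Δ (h * g) = Δ h * Δ g) ∧
  -- weak counit axiom
  (∀ h ∈ H, ∀ g ∈ H, ∀ f ∈ H, ∀ (m : ℕ) (g1 g2 : Fin m → R),
      Δ g = ∑ i, g1 i ⊗ₜ[k] g2 i →
      (ε (h * g * f) = ∑ i, ε (h * g1 i) * ε (g2 i * f)) ∧
      (ε (h * g * f) = ∑ i, ε (h * g2 i) * ε (g1 i * f))) ∧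
  -- weak unit axiom
  (∀ (m : ℕ) (o1 o2 : Fin m → R), Δ 1 = ∑ j, o1 j ⊗ₜ[k] o2 j →
      (TensorProduct.map Δ LinearMap.id (Δ 1)
        = ∑ j, ∑ j', (o1 j ⊗ₜ[k] (o2 j * o1 j')) ⊗ₜ[k] o2 j') ∧
      (TensorProduct.map Δ LinearMap.id (Δ 1)
        = ∑ j, ∑ j', (o1 j' ⊗ₜ[k] (o1 j * o2 j')) ⊗ₜ[k] o2 j)) ∧
  -- antipode axioms
  (∀ h ∈ H, ∀ (m : ℕ) (h1 h2 : Fin m → R), Δ h = ∑ i, h1 i ⊗ₜ[k] h2 i →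
     ∀ (m0 : ℕ) (o1 o2 : Fin m0 → R), Δ 1 = ∑ j, o1 j ⊗ₜ[k] o2 j →
      (∑ i, h1 i * S (h2 i) = ∑ j, ε (o1 j * h) • o2 j) ∧
      (∑ i, S (h1 i) * h2 i = ∑ j, ε (h * o2 j) • o1 j)) ∧
  (∀ h ∈ H, LinearMap.mul' k R
      (TensorProduct.map (LinearMap.mul' k R ∘ₗ TensorProduct.map S LinearMap.id) S
        (TensorProduct.map Δ LinearMap.id (Δ h))) = S h)

/-- The counit `ε(b) = ⟨1, b⟩` of `B`, as a linear functional. -/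
noncomputable def epsL {k : Type*} [Field k] {R : Type*} [Ring R] [Algebra k R]
    (D : D2H k R) : R →ₗ[k] k :=
  (D.lam⁻¹ ^ 2) • (D.T ∘ₗ LinearMap.mulLeft k (1 * D.e2 * D.e1 * D.w))

/-- The counit `ε_A(a) = ⟨a, 1⟩` of `A`, as a linear functional. -/
noncomputable def epsAL {k : Type*} [Field k] {R : Type*} [Ring R] [Algebra k R]
    (D : D2H k R) : R →ₗ[k] k :=
  (D.lam⁻¹ ^ 2) • (D.T ∘ₗ LinearMap.mulRight k (D.e2 * D.e1 * D.w * 1))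

/-!
The proof makes every structure map of `B` explicit and reduces the weak Hopf identities to a single
trace formula.

**Dual bases.** The map `Q(c) = ∑ xᵢ c yᵢ` sends `C` to `B`, is a `B`-bimodule map, satisfies
`Q(e₁) = 1`, and by the symmetric product assumption `T(Q(c) b) = λ⁻¹ T(c b)`. Together with the Jones
and Pimsner-Popa relations it inverts, up to `λ²`, the map `b ↦ E_{M₁}(b e₁ e₂)` from `B` to `A`
(`rec_l`, `rec_A`). The elements `β_m = u_l f⁽¹⁾_i` and `w f⁽²⁾_i v_l` are dual bases of the trace form
on `B`, and transporting the latter to `A` gives `α_m` dual to `β_m` for the pairing. Hence the pairing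
is perfect and `Δ(c) = ∑ β_m ⊗ γ_m(c)`, where `γ_m` is the transpose of left multiplication by `α_m`
(`Δ_eq`).

**The trace formula.** For `a, a' ∈ A` and `c, d ∈ B`, the lemma `core` states that
`T(c₍₁₎ a e₂ a') T(c₍₂₎ d) = λ T(c a d w⁻¹ a')`. Separating points of `C` by `B A`, it
gives the commutation rule `c a = λ⁻¹ E_{M₁}(c₍₁₎ a e₂) c₍₂₎` (`P1`), which says that `B` acts on `A`
as on a module algebra and so, dually, that `Δ` is multiplicative. Suitable choices of `a, a', d` give
the two weak counit identities. The weak unit identities come from `Δ(v) = v 1₍₁₎ ⊗ 1₍₂₎ =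
1₍₁₎ v ⊗ 1₍₂₎` for `v ∈ V`, since `Δ(1)` has its second leg in `V`.

**Antipode.** The lemma `S_swap`, `T(S(c) a e₂ a') = T(w c w⁻¹ a' e₂ a)`, moves `S` across the trace.
Combined with `core` it yields `h₍₁₎ S(h₍₂₎) = λ⁻¹ E_{M₁}(h e₂)`, which is the target counital map, the
corresponding formula for `S(h₍₁₎) h₍₂₎`, and `S(h₍₁₎) h₍₂₎ S(h₍₃₎) = S(h)`.

**Duality and semisimplicity.** The identities of a weak Hopf algebra are self-dual, so those of `A`
follow by pairing with `B`: multiplicativity is dual to multiplicativity, weak unit to weak counit, and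
each antipode identity to itself. Semisimplicity follows from transitivity of separability along
`V ⊆ B` and `U ⊆ A`, whose dual bases have index `λ⁻¹` (`sum_uv`, `sum_zw`).
-/

/-! ### Centralizers, the conditional expectations and the map `Q` -/

namespace D2H
variable {k : Type*} [Field k] {R : Type*} [Ring R] [Algebra k R] (D : D2H k R)

/-- `A = C_{M₁}(N)`, for a tower with Hopf data `D`. -/
abbrev cA : Subalgebra k R := D2.A D.toD2S.toD2
/-- `B = C_{M₂}(M)`. -/
abbrev cB : Subalgebra k R := D2.B D.toD2S.toD2
/-- `C = C_{M₂}(N)`; it contains both `A` and `B`. -/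
abbrev cC : Subalgebra k R := D2.C D.toD2S.toD2
/-- `V = C_{M₁}(M) = A ∩ B`. -/
abbrev cV : Subalgebra k R := D2.V D.toD2S.toD2
/-- `U = C_M(N)`; it is contained in `A` and commutes with `B`. -/
abbrev cU : Subalgebra k R := D2.U D.toD2S.toD2

variable {D}

theorem mem_cB {b : R} : b ∈ D.cB ↔ ∀ y ∈ D.M, b * y = y * b := by
  simp only [cB, D2.B, Subalgebra.mem_centralizer_iff, SetLike.mem_coe]
  exact forall₂_congr fun _ _ => eq_comm
theorem mem_cC {b : R} : b ∈ D.cC ↔ ∀ y ∈ D.N, b * y = y * b := by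
  simp only [cC, D2.C, Subalgebra.mem_centralizer_iff, SetLike.mem_coe]
  exact forall₂_congr fun _ _ => eq_comm
theorem mem_cA {a : R} : a ∈ D.cA ↔ a ∈ D.M1 ∧ ∀ y ∈ D.N, a * y = y * a := by
  rw [← mem_cC]; exact Iff.rfl
theorem mem_cV {a : R} : a ∈ D.cV ↔ a ∈ D.M1 ∧ ∀ y ∈ D.M, a * y = y * a := by
  rw [← mem_cB]; exact Iff.rfl
theorem mem_cU {a : R} : a ∈ D.cU ↔ a ∈ D.M ∧ ∀ y ∈ D.N, a * y = y * a := by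
  rw [← mem_cC]; exact Iff.rfl

theorem commB {b y : R} (hb : b ∈ D.cB) (hy : y ∈ D.M) : b * y = y * b := mem_cB.1 hb y hy
theorem commC {b y : R} (hb : b ∈ D.cC) (hy : y ∈ D.N) : b * y = y * b := mem_cC.1 hb y hy
theorem B_C {b : R} (hb : b ∈ D.cB) : b ∈ D.cC := mem_cC.2 fun y hy => commB hb (D.hNM hy)
theorem A_C {b : R} (hb : b ∈ D.cA) : b ∈ D.cC := hb.2
theorem A_M1 {b : R} (hb : b ∈ D.cA) : b ∈ D.M1 := hb.1
theorem V_B {b : R} (hb : b ∈ D.cV) : b ∈ D.cB := hb.2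
theorem V_A {b : R} (hb : b ∈ D.cV) : b ∈ D.cA := ⟨hb.1, B_C hb.2⟩
theorem U_A {b : R} (hb : b ∈ D.cU) : b ∈ D.cA := ⟨D.hMM1 hb.1, hb.2⟩
theorem e1_A : D.e1 ∈ D.cA := mem_cA.2 ⟨D.he1_mem, D.he1_N⟩
theorem e2_B : D.e2 ∈ D.cB := mem_cB.2 D.he2_M
theorem w_V : D.w ∈ D.cV := mem_cV.2 D.hw_mem
theorem wi_V : D.winv ∈ D.cV := mem_cV.2 D.hwinv_mem
theorem f1_V (i) : D.f1 i ∈ D.cV := mem_cV.2 (D.hf1 i)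
theorem f2_V (i) : D.f2 i ∈ D.cV := mem_cV.2 (D.hf2 i)
theorem w_B : D.w ∈ D.cB := V_B w_V
theorem wi_B : D.winv ∈ D.cB := V_B wi_V
theorem w_A : D.w ∈ D.cA := V_A w_V
theorem wi_A : D.winv ∈ D.cA := V_A wi_V
theorem e1_C : D.e1 ∈ D.cC := A_C e1_A
theorem e2_C : D.e2 ∈ D.cC := B_C e2_B
theorem u_B (i) : D.ub i ∈ D.cB := mem_cB.2 (D.hub i)
theorem v_B (i) : D.vb i ∈ D.cB := mem_cB.2 (D.hvb i)
theorem w_wi : D.w * D.winv = 1 := D.hw_inv.1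
theorem wi_w : D.winv * D.w = 1 := D.hw_inv.2
theorem w_central {v : R} (hv : v ∈ D.cV) : D.w * v = v * D.w :=
  D.hw_central v (mem_cV.1 hv).1 (mem_cV.1 hv).2
theorem wi_central {v : R} (hv : v ∈ D.cV) : D.winv * v = v * D.winv := by
  calc D.winv * v = D.winv * (v * (D.w * D.winv)) := by rw [w_wi, mul_one]
    _ = D.winv * (D.w * v) * D.winv := by rw [w_central hv]; simp only [mul_assoc]
    _ = v * D.winv := by rw [← mul_assoc D.winv, wi_w, one_mul]

theorem EM1_A {c : R} (hc : c ∈ D.cC) : D.EM1 c ∈ D.cA := mem_cA.2 ⟨D.hEM1_mem c, fun y hy => by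
  have hy1 := D.hMM1 (D.hNM hy)
  rw [← D.hEM1_left y hy1, ← D.hEM1_right y hy1, commC hc hy]⟩
theorem EM1_V {c : R} (hc : c ∈ D.cB) : D.EM1 c ∈ D.cV := mem_cV.2 ⟨D.hEM1_mem c, fun y hy => by
  have hy1 := D.hMM1 hy
  rw [← D.hEM1_left y hy1, ← D.hEM1_right y hy1, commB hc hy]⟩
theorem EM_U {c : R} (hc : c ∈ D.cA) : D.EM c ∈ D.cU :=
  mem_cU.2 ⟨D.hEM_mem c (A_M1 hc), fun y hy => by
  have hy1 := (D.hNM hy)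
  rw [← D.hEM_left y hy1 c (A_M1 hc), ← D.hEM_right y hy1 c (A_M1 hc), commC (A_C hc) hy]⟩

theorem EM1_e2 {x : R} (hx : x ∈ D.M1) : D.EM1 (x * D.e2) = D.lam • x := by
  simpa using D.hEM1_e2 x hx 1 (one_mem _)
theorem T_e2 {x : R} (hx : x ∈ D.M1) : D.T (x * D.e2) = D.lam * D.T x := by
  rw [← D.hTEM1, EM1_e2 hx, map_smul, smul_eq_mul]
theorem EM_e1 {x : R} (hx : x ∈ D.M) : D.EM (x * D.e1) = D.lam • x := by
  simpa using D.hEM_e1 x hx 1 (one_mem _)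
theorem T_EM1_l {x m : R} (hm : m ∈ D.M1) : D.T (D.EM1 x * m) = D.T (x * m) := by
  rw [← D.hEM1_right m hm, D.hTEM1]
theorem T_EM1_r {x m : R} (hm : m ∈ D.M1) : D.T (m * D.EM1 x) = D.T (m * x) := by
  rw [← D.hEM1_left m hm, D.hTEM1]
theorem T_EM_l {x m : R} (hx : x ∈ D.M1) (hm : m ∈ D.M) : D.T (D.EM x * m) = D.T (x * m) := by
  rw [← D.hEM_right m hm x hx, D.hTEM _ (mul_mem hx (D.hMM1 hm))]
theorem T_EM_r {x m : R} (hx : x ∈ D.M1) (hm : m ∈ D.M) : D.T (m * D.EM x) = D.T (m * x) := by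
  rw [← D.hEM_left m hm x hx, D.hTEM _ (mul_mem (D.hMM1 hm) hx)]

/-- The element `∑ xᵢ e₁ yᵢ` is a left unit on each `m e₁ m'`, hence is the unit of `M₁`. -/
theorem sum_xey : ∑ i, D.xb i * D.e1 * D.yb i = 1 := by
  have key : ∀ z ∈ D.M1, (∑ i, D.xb i * D.e1 * D.yb i) * z = z := by
    intro z hz
    have hz' : z ∈ D.M1.toSubmodule := hz
    rw [D.hM1_gen] at hz'
    induction hz' using Submodule.span_induction with
    | mem z h =>
      obtain ⟨m, hm, m', hm', rfl⟩ := h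
      calc (∑ i, D.xb i * D.e1 * D.yb i) * (m * D.e1 * m')
          = (∑ i, D.xb i * (D.e1 * (D.yb i * m) * D.e1)) * m' := by
            simp only [Finset.sum_mul, mul_assoc]
        _ = (∑ i, D.xb i * D.E (D.yb i * m)) * D.e1 * m' := by
            congr 1
            rw [Finset.sum_mul]
            refine Finset.sum_congr rfl fun i _ => ?_
            have h := mul_mem (D.hyb i) hm
            rw [D.he1_jones _ h, D.he1_jones' _ h, mul_assoc]
        _ = m * D.e1 * m' := by rw [D.hdual2 m hm]
    | zero => simp
    | add x y hx hy h1 h2 =>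
      rw [← D.hM1_gen] at hx hy
      rw [mul_add, h1 hx, h2 hy]
    | smul c x hx h1 =>
      rw [← D.hM1_gen] at hx
      rw [mul_smul_comm, h1 hx]
  simpa using key 1 (one_mem _)

variable (D) in
/-- The map `Q(c) = ∑ xᵢ c yᵢ`. -/
noncomputable def Q : R →ₗ[k] R :=
  ∑ i, LinearMap.mulLeft k (D.xb i) ∘ₗ LinearMap.mulRight k (D.yb i)

theorem Q_apply (c : R) : D.Q c = ∑ i, D.xb i * c * D.yb i := by
  simp [Q, mul_assoc]

/-- `Q` maps `C` into `B`: the dual bases tensor `∑ xᵢ ⊗ yᵢ` is a Casimir element over `N`. -/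
theorem Q_B {c : R} (hc : c ∈ D.cC) : D.Q c ∈ D.cB := by
  refine mem_cB.2 fun m hm => ?_
  have h1 : ∀ i, m * D.xb i = ∑ j, D.xb j * D.E (D.yb j * (m * D.xb i)) := fun i =>
    (D.hdual2 _ (mul_mem hm (D.hxb i))).symm
  have h2 : ∀ j, D.yb j * m = ∑ i, D.E (D.yb j * m * D.xb i) * D.yb i := fun i =>
    (D.hdual1 _ (mul_mem (D.hyb i) hm)).symm
  rw [Q_apply, Finset.sum_mul, Finset.mul_sum]
  calc ∑ j, D.xb j * c * D.yb j * m
      = ∑ j, ∑ i, D.xb j * c * (D.E (D.yb j * m * D.xb i) * D.yb i) := by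
        refine Finset.sum_congr rfl fun j _ => ?_
        rw [← Finset.mul_sum, ← h2, mul_assoc, mul_assoc]
    _ = ∑ i, ∑ j, D.xb j * D.E (D.yb j * (m * D.xb i)) * (c * D.yb i) := by
        rw [Finset.sum_comm]
        refine Finset.sum_congr rfl fun i _ => Finset.sum_congr rfl fun j _ => ?_
        have := commC hc (D.hE_mem (D.yb j * m * D.xb i)
          (mul_mem (mul_mem (D.hyb j) hm) (D.hxb i)))
        rw [← mul_assoc (D.xb j * c), mul_assoc (D.xb j) c, this, ← mul_assoc (D.yb j) m]
        simp only [mul_assoc]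
    _ = ∑ i, m * (D.xb i * c * D.yb i) := by
        refine Finset.sum_congr rfl fun i _ => ?_
        rw [← Finset.sum_mul, ← h1]; simp only [mul_assoc]

theorem Q_V {c : R} (hc : c ∈ D.cA) : D.Q c ∈ D.cV :=
  ⟨by rw [Q_apply]
      exact sum_mem fun i _ => mul_mem (mul_mem (D.hMM1 (D.hxb i)) (A_M1 hc)) (D.hMM1 (D.hyb i)),
   Q_B (A_C hc)⟩

theorem Q_mul {b : R} (hb : b ∈ D.cB) (c : R) : D.Q (c * b) = D.Q c * b := by
  rw [Q_apply, Q_apply, Finset.sum_mul]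
  refine Finset.sum_congr rfl fun i _ => ?_
  simp only [mul_assoc]; rw [commB hb (D.hyb i)]
theorem mul_Q {b : R} (hb : b ∈ D.cB) (c : R) : D.Q (b * c) = b * D.Q c := by
  rw [Q_apply, Q_apply, Finset.mul_sum]
  refine Finset.sum_congr rfl fun i _ => ?_
  rw [← mul_assoc, ← commB hb (D.hxb i)]; simp only [mul_assoc]
/-- Because `∑ yᵢ xᵢ = λ⁻¹` (symmetric product), `λ Q` preserves the trace against `B`. -/
theorem T_Q {b : R} (hb : b ∈ D.cB) (c : R) : D.T (D.Q c * b) = D.lam⁻¹ * D.T (c * b) := by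
  have : ∀ i, D.T (D.xb i * c * D.yb i * b) = D.T (c * b * (D.yb i * D.xb i)) := fun i => by
    rw [mul_assoc, mul_assoc, D.hT_tr, ← commB hb (D.hyb i)]; simp only [mul_assoc]
  rw [Q_apply, Finset.sum_mul, map_sum]
  simp only [this]
  rw [← map_sum, ← Finset.mul_sum, D.hindex', mul_smul_comm, mul_one, map_smul, smul_eq_mul]
theorem T_Q' {b : R} (hb : b ∈ D.cB) (c : R) : D.T (b * D.Q c) = D.lam⁻¹ * D.T (b * c) := by
  rw [D.hT_tr, T_Q hb, D.hT_tr]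
theorem Q_e1 : D.Q D.e1 = 1 := by rw [Q_apply, sum_xey]
/-- The Markov property of the trace on `B`; it uses `Q(e₁) = 1`. -/
theorem T_e1 {b : R} (hb : b ∈ D.cB) : D.T (D.e1 * b) = D.lam * D.T b := by
  have := T_Q hb D.e1
  rw [Q_e1, one_mul] at this
  rw [this, mul_inv_cancel_left₀ D.lam_ne]
theorem sum_xE : ∑ i, D.xb i * D.E (D.yb i) = 1 := by simpa using D.hdual2 1 (one_mem _)
theorem sum_Ey : ∑ i, D.E (D.xb i) * D.yb i = 1 := by simpa using D.hdual1 1 (one_mem _)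

theorem Q_mul_e1 {c : R} (hc : c ∈ D.cC) : D.Q (c * D.e1) * D.e1 = c * D.e1 := by
  rw [Q_apply, Finset.sum_mul]
  calc ∑ i, D.xb i * (c * D.e1) * D.yb i * D.e1
      = ∑ i, D.xb i * D.E (D.yb i) * (c * D.e1) := by
        refine Finset.sum_congr rfl fun i _ => ?_
        have h1 := D.he1_jones _ (D.hyb i)
        have h2 := commC hc (D.hE_mem _ (D.hyb i))
        calc _ = D.xb i * c * (D.e1 * D.yb i * D.e1) := by simp only [mul_assoc]
          _ = D.xb i * (c * D.E (D.yb i)) * D.e1 := by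
            rw [h1, D.he1_jones' _ (D.hyb i)]; simp only [mul_assoc]
          _ = _ := by rw [h2]; simp only [mul_assoc]
    _ = _ := by rw [← Finset.sum_mul, sum_xE, one_mul]
theorem e1_mul_Q {c : R} (hc : c ∈ D.cC) : D.e1 * D.Q (D.e1 * c) = D.e1 * c := by
  rw [Q_apply, Finset.mul_sum]
  calc ∑ i, D.e1 * (D.xb i * (D.e1 * c) * D.yb i)
      = ∑ i, D.e1 * c * (D.E (D.xb i) * D.yb i) := by
        refine Finset.sum_congr rfl fun i _ => ?_
        have h1 := D.he1_jones _ (D.hxb i)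
        have h2 := commC hc (D.hE_mem _ (D.hxb i))
        calc _ = (D.e1 * D.xb i * D.e1) * c * D.yb i := by simp only [mul_assoc]
          _ = D.e1 * (c * D.E (D.xb i)) * D.yb i := by rw [h1, h2]; simp only [mul_assoc]
          _ = _ := by simp only [mul_assoc]
    _ = _ := by rw [← Finset.mul_sum, sum_Ey, mul_one]

theorem PP2 (x : R) : D.EM1 (x * D.e2) * D.e2 = D.lam • (x * D.e2) := by
  rw [D.hPP2 x, smul_smul, mul_inv_cancel₀ D.lam_ne, one_smul, ← D.hPP2]
theorem PP2' (x : R) : D.e2 * D.EM1 (D.e2 * x) = D.lam • (D.e2 * x) := by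
  rw [D.hPP2' x, smul_smul, mul_inv_cancel₀ D.lam_ne, one_smul, ← D.hPP2']

/-- An element of `B` is recovered from the element `E_{M₁}(b e₁ e₂)` of `A`. -/
theorem rec_l {b : R} (hb : b ∈ D.cB) :
    D.Q (D.EM1 (b * D.e1 * D.e2) * D.e2 * D.e1) = D.lam ^ 2 • b := by
  rw [PP2, smul_mul_assoc, mul_assoc b, mul_assoc b, D.hbraid1, mul_smul_comm, map_smul, map_smul,
    mul_Q hb, Q_e1, mul_one, smul_smul, pow_two]
/-- Mirror image of `rec_l`. -/
theorem rec_r {b : R} (hb : b ∈ D.cB) :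
    D.Q (D.e1 * D.e2 * D.EM1 (D.e2 * D.e1 * b)) = D.lam ^ 2 • b := by
  rw [mul_assoc D.e1, mul_assoc D.e2 D.e1, PP2', mul_smul_comm, ← mul_assoc, ← mul_assoc,
    D.hbraid1, smul_mul_assoc, map_smul, map_smul, Q_mul hb, Q_e1, one_mul, smul_smul, pow_two]
/-- An element of `A` is recovered from the element `Q(a e₂ e₁)` of `B`; with `rec_l` this makes
`A` and `B` linearly isomorphic. -/
theorem rec_A {a : R} (ha : a ∈ D.cA) :
    D.EM1 (D.Q (a * D.e2 * D.e1) * D.e1 * D.e2) = D.lam ^ 2 • a := by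
  rw [Q_mul_e1 (mul_mem (A_C ha) e2_C), mul_assoc a, mul_assoc a, D.hbraid2, mul_smul_comm,
    map_smul, EM1_e2 (A_M1 ha), smul_smul, pow_two]

/-! ### Dual bases of `B` and separation by the trace -/

theorem dualV {v : R} (hv : v ∈ D.cV) : ∑ i, D.T (v * (D.w * D.f2 i)) • D.f1 i = v :=
  D.hw_dual v (mem_cV.1 hv).1 (mem_cV.1 hv).2
/-- The dual bases `f⁽¹⁾, w f⁽²⁾` of the trace on `V` may be interchanged, as the separability
element is symmetric. -/
theorem dualV' {v : R} (hv : v ∈ D.cV) : ∑ i, D.T (v * D.f1 i) • (D.w * D.f2 i) = v := by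
  have hv' : v * D.winv ∈ D.cV := mul_mem hv wi_V
  have h1 := congrArg (TensorProduct.lift (LinearMap.mk₂ k
    (fun p q : R => D.T (v * D.winv * D.w * q) • p)
    (by intros; simp only [smul_add]) (by intros; exact smul_comm _ _ _)
    (by intros; simp only [mul_add, map_add, add_smul])
    (by intros; simp only [mul_smul_comm, map_smul, smul_assoc]))) D.hf_symm
  simp only [map_sum, TensorProduct.lift.tmul, LinearMap.mk₂_apply] at h1
  have h2 := dualV hv'
  simp only [← mul_assoc] at h2
  rw [h1] at h2
  simp only [mul_assoc v, wi_w, mul_one] at h2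
  have h3 := congrArg (D.w * ·) h2
  simp only [Finset.mul_sum, mul_smul_comm] at h3
  rw [h3, ← wi_central hv, ← mul_assoc, w_wi, one_mul]

theorem f21 : ∑ i, D.f2 i * D.f1 i = 1 := by
  have h1 := congrArg (LinearMap.mul' k R) D.hf_symm
  simp only [map_sum, LinearMap.mul'_apply] at h1
  rw [← h1, D.hf_one]

variable (D) in
/-- Index set of the dual bases of `B`: pairs of an index of the `E_{M₁}`-dual bases and an index
of the separability element of `V`. -/
abbrev ix : Type := Fin D.nB × Fin D.nV
variable (D) in
/-- The basis elements `β_m = u_l f⁽¹⁾_i` of `B`, for `m = (l, i)`. -/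
def bt (m : D.ix) : R := D.ub m.1 * D.f1 m.2
variable (D) in
/-- The elements `w f⁽²⁾_i v_l` of `B`, dual to `β_m` for the trace form `T`. -/
def bd (m : D.ix) : R := D.w * D.f2 m.2 * D.vb m.1
theorem bt_B (m) : D.bt m ∈ D.cB := mul_mem (u_B _) (V_B (f1_V _))
theorem bd_B (m) : D.bd m ∈ D.cB := mul_mem (mul_mem w_B (V_B (f2_V _))) (v_B _)

theorem dualB1 {c : R} (hc : c ∈ D.cB) : ∑ m, D.T (c * D.bt m) • D.bd m = c := by
  conv_rhs => rw [← D.hdualB1 c]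
  rw [Fintype.sum_prod_type]
  refine Finset.sum_congr rfl fun l _ => ?_
  rw [← dualV' (EM1_V (mul_mem hc (u_B l))), Finset.sum_mul]
  refine Finset.sum_congr rfl fun i _ => ?_
  rw [T_EM1_l (f1_V i).1, smul_mul_assoc, mul_assoc c]; rfl
theorem dualB2 {c : R} (hc : c ∈ D.cB) : ∑ m, D.T (D.bd m * c) • D.bt m = c := by
  conv_rhs => rw [← D.hdualB2 c]
  rw [Fintype.sum_prod_type]
  refine Finset.sum_congr rfl fun l _ => ?_
  rw [← dualV (EM1_V (mul_mem (v_B l) hc)), Finset.mul_sum]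
  refine Finset.sum_congr rfl fun i _ => ?_
  rw [T_EM1_l (mul_mem w_V (f2_V i)).1, mul_smul_comm, D.hT_tr (D.vb l * c), bd, bt]
  simp only [mul_assoc]
/-- The `T`-dual bases of `B`, corrected by `w⁻¹`, are dual bases of `E_{M₁}` on all of `M₂`. -/
theorem K1 (y : R) : ∑ m, D.bt m * D.winv * D.EM1 (D.bd m * y) = y := by
  conv_rhs => rw [← D.hdualB2 y]
  rw [Fintype.sum_prod_type]
  refine Finset.sum_congr rfl fun l _ => ?_
  have : ∀ i, D.bt (l, i) * D.winv * D.EM1 (D.bd (l, i) * y)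
     = D.ub l * (D.f1 i * D.f2 i) * D.EM1 (D.vb l * y) := fun i => by
    rw [bt, bd, mul_assoc (D.w * _), D.hEM1_left _ (mul_mem w_V (f2_V i)).1]
    calc _ = D.ub l * D.f1 i * (D.winv * D.w) * D.f2 i * D.EM1 (D.vb l * y) := by
          simp only [mul_assoc]
      _ = _ := by rw [wi_w, mul_one]; simp only [mul_assoc]
  simp only [this]
  rw [← Finset.sum_mul, ← Finset.mul_sum, D.hf_one, mul_one]
/-- Mirror image of `K1`. -/
theorem K2 (y : R) : ∑ m, D.EM1 (y * D.bt m) * D.winv * D.bd m = y := by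
  conv_rhs => rw [← D.hdualB1 y]
  rw [Fintype.sum_prod_type]
  refine Finset.sum_congr rfl fun l _ => ?_
  have : ∀ i, D.EM1 (y * D.bt (l, i)) * D.winv * D.bd (l, i)
     = D.EM1 (y * D.ub l) * (D.f1 i * D.f2 i) * D.vb l := fun i => by
    rw [bt, bd, ← mul_assoc y, D.hEM1_right _ (f1_V i).1]
    calc _ = D.EM1 (y * D.ub l) * D.f1 i * (D.winv * D.w) * D.f2 i * D.vb l := by
          simp only [mul_assoc]
      _ = _ := by rw [wi_w, mul_one]; simp only [mul_assoc]
  simp only [this]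
  rw [← Finset.sum_mul, ← Finset.mul_sum, D.hf_one, mul_one]

/-- The trace form of `B` is non-degenerate. -/
theorem sepB {b : R} (hb : b ∈ D.cB) (h : ∀ d ∈ D.cB, D.T (b * d) = 0) : b = 0 := by
  rw [← dualB1 hb]
  exact Finset.sum_eq_zero fun m _ => by rw [h _ (bt_B m), zero_smul]
/-- The elements `a e₂ e₁` already separate the points of `B`, because `rec_l` writes every
`b ∈ B` as `Q` of such an element. -/
theorem sepB_l {b : R} (hb : b ∈ D.cB) (h : ∀ a ∈ D.cA, D.T (b * (a * D.e2 * D.e1)) = 0) :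
    b = 0 := by
  refine sepB hb fun d hd => ?_
  have h1 := h _ (EM1_A (mul_mem (mul_mem (B_C hd) e1_C) e2_C))
  have h2 := T_Q' hb (D.EM1 (d * D.e1 * D.e2) * D.e2 * D.e1)
  rw [h1, rec_l hd, mul_zero, mul_smul_comm, map_smul, smul_eq_mul] at h2
  exact (mul_eq_zero.1 h2).resolve_left (pow_ne_zero _ D.lam_ne)
/-- The elements `e₁ e₂ a` separate the points of `B`. -/
theorem sepB_r {b : R} (hb : b ∈ D.cB) (h : ∀ a ∈ D.cA, D.T (b * (D.e1 * D.e2 * a)) = 0) :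
    b = 0 := by
  refine sepB hb fun d hd => ?_
  have h1 := h _ (EM1_A (mul_mem (mul_mem e2_C e1_C) (B_C hd)))
  have h2 := T_Q' hb (D.e1 * D.e2 * D.EM1 (D.e2 * D.e1 * d))
  rw [h1, rec_r hd, mul_zero, mul_smul_comm, map_smul, smul_eq_mul] at h2
  exact (mul_eq_zero.1 h2).resolve_left (pow_ne_zero _ D.lam_ne)
/-- The trace form of `A` is non-degenerate. -/
theorem sepA {a : R} (ha : a ∈ D.cA) (h : ∀ a' ∈ D.cA, D.T (a * a') = 0) : a = 0 := by
  have h0 : D.Q (a * D.e2 * D.e1) = 0 := by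
    refine sepB (Q_B (mul_mem (mul_mem (A_C ha) e2_C) e1_C)) fun d hd => ?_
    have h1 := h _ (EM1_A (mul_mem (mul_mem e2_C e1_C) (B_C hd)))
    rw [T_EM1_r (A_M1 ha)] at h1
    rw [T_Q hd, mul_assoc a, mul_assoc a, h1, mul_zero]
  have h1 := rec_A ha
  rw [h0, zero_mul, zero_mul, map_zero] at h1
  exact (smul_eq_zero.1 h1.symm).resolve_left (pow_ne_zero _ D.lam_ne)
/-- The products `d a` with `d ∈ B`, `a ∈ A` separate the points of `C`. -/
theorem sepC {c : R} (hc : c ∈ D.cC) (h : ∀ d ∈ D.cB, ∀ a ∈ D.cA, D.T (c * d * a) = 0) :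
    c = 0 := by
  rw [← D.hdualB1 c]
  refine Finset.sum_eq_zero fun l _ => ?_
  rw [sepA (EM1_A (mul_mem hc (B_C (u_B l)))) fun a ha => ?_, zero_mul]
  rw [T_EM1_l (A_M1 ha), h _ (u_B l) a ha]

end D2H

/-! ### Tensor squares of a subalgebra -/

section tensor
variable {k : Type*} [Field k] {R : Type*} [Ring R] [Algebra k R]

/-- The functional `φ ⊗ ψ` on `R ⊗ R`. -/
noncomputable def ev (φ ψ : R →ₗ[k] k) : R ⊗[k] R →ₗ[k] k :=
  LinearMap.mul' k k ∘ₗ TensorProduct.map φ ψ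

@[simp] theorem ev_tmul (φ ψ : R →ₗ[k] k) (x y : R) : ev φ ψ (x ⊗ₜ[k] y) = φ x * ψ y := rfl

/-- The span of `x ⊗ y` with `x, y ∈ H`, that is, the image of `H ⊗ H` in `R ⊗ R`. -/
abbrev sq2 (H : Subalgebra k R) : Submodule k (R ⊗[k] R) :=
  Submodule.span k {z : R ⊗[k] R | ∃ x ∈ H, ∃ y ∈ H, z = x ⊗ₜ[k] y}

theorem tmul_sq2 {H : Subalgebra k R} {x y : R} (hx : x ∈ H) (hy : y ∈ H) :
    x ⊗ₜ[k] y ∈ sq2 H := Submodule.subset_span ⟨x, hx, y, hy, rfl⟩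

theorem mul_sq2 {H : Subalgebra k R} {X Y : R ⊗[k] R} (hX : X ∈ sq2 H) (hY : Y ∈ sq2 H) :
    X * Y ∈ sq2 H := by
  induction hX using Submodule.span_induction with
  | mem X h =>
    obtain ⟨x, hx, y, hy, rfl⟩ := h
    induction hY using Submodule.span_induction with
    | mem Y h =>
      obtain ⟨x', hx', y', hy', rfl⟩ := h
      rw [Algebra.TensorProduct.tmul_mul_tmul]
      exact tmul_sq2 (mul_mem hx hx') (mul_mem hy hy')
    | zero => rw [mul_zero]; exact zero_mem _
    | add X Y _ _ h1 h2 => rw [mul_add]; exact add_mem h1 h2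
    | smul c X _ h => rw [mul_smul_comm]; exact Submodule.smul_mem _ _ h
  | zero => rw [zero_mul]; exact zero_mem _
  | add X Y _ _ h1 h2 => rw [add_mul]; exact add_mem h1 h2
  | smul c X _ h => rw [smul_mul_assoc]; exact Submodule.smul_mem _ _ h

/-- If `b = ∑ αᵢ(b) βᵢ` on `H`, then elements of `H ⊗ H` are expanded in the `βᵢ ⊗ βⱼ` with
coefficients `αᵢ ⊗ αⱼ`; the `βᵢ` need not be linearly independent. -/
theorem rep_sq2 {H : Subalgebra k R} {ι : Type*} [Fintype ι] {α : ι → R →ₗ[k] k} {β : ι → R}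
    (hd : ∀ b ∈ H, ∑ i, α i b • β i = b) {X : R ⊗[k] R} (hX : X ∈ sq2 H) :
    X = ∑ i, ∑ j, ev (α i) (α j) X • (β i ⊗ₜ[k] β j) := by
  induction hX using Submodule.span_induction with
  | mem X h =>
    obtain ⟨x, hx, y, hy, rfl⟩ := h
    conv_lhs => rw [← hd x hx, ← hd y hy]
    rw [TensorProduct.sum_tmul]
    refine Finset.sum_congr rfl fun i _ => ?_
    rw [TensorProduct.tmul_sum]
    refine Finset.sum_congr rfl fun j _ => ?_
    rw [TensorProduct.tmul_smul, ← TensorProduct.smul_tmul', smul_smul, ev_tmul, mul_comm]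
  | zero => simp
  | add X Y _ _ h1 h2 =>
    conv_lhs => rw [h1, h2]
    simp only [map_add, add_smul, Finset.sum_add_distrib]
  | smul c X _ h =>
    conv_lhs => rw [h]
    simp only [map_smul, Finset.smul_sum, smul_eq_mul, mul_smul]

theorem ext_sq2 {H : Subalgebra k R} {ι : Type*} [Fintype ι] {α : ι → R →ₗ[k] k} {β : ι → R}
    (hd : ∀ b ∈ H, ∑ i, α i b • β i = b) {X Y : R ⊗[k] R} (hX : X ∈ sq2 H) (hY : Y ∈ sq2 H)
    (h : ∀ i j, ev (α i) (α j) X = ev (α i) (α j) Y) : X = Y := by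
  rw [rep_sq2 hd hX, rep_sq2 hd hY]
  simp only [h]

theorem exists_fin_rep (X : R ⊗[k] R) : ∃ (m : ℕ) (x y : Fin m → R), X = ∑ i, x i ⊗ₜ[k] y i := by
  induction X using TensorProduct.induction_on with
  | zero => exact ⟨0, Fin.elim0, Fin.elim0, by simp⟩
  | tmul x y => exact ⟨1, fun _ => x, fun _ => y, by simp⟩
  | add X Y h1 h2 =>
    obtain ⟨m, x, y, rfl⟩ := h1
    obtain ⟨n, x', y', rfl⟩ := h2
    exact ⟨m + n, Fin.append x x', Fin.append y y', by simp [Fin.sum_univ_add]⟩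
end tensor

namespace D2H
variable {k : Type*} [Field k] {R : Type*} [Ring R] [Algebra k R] {D : D2H k R}

/-! ### The pairing, dual bases of `A` and `B`, and the explicit coproduct -/

variable (D) in
/-- The pairing `⟨a, b⟩`, as a bilinear map on all of `R`. -/
noncomputable def P : R →ₗ[k] R →ₗ[k] k :=
  LinearMap.mk₂ k D.pr
    (by intros; simp only [pr, add_mul, map_add, mul_add])
    (by intros; simp only [pr, smul_mul_assoc, map_smul, smul_eq_mul]; ring)
    (by intros; simp only [pr, map_add, mul_add])
    (by intros; simp only [pr, mul_smul_comm, map_smul, smul_eq_mul]; ring)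
theorem P_apply (a b : R) : D.P a b = D.lam⁻¹ ^ 2 * D.T (a * D.e2 * D.e1 * D.w * b) := rfl
theorem P_pr (a b : R) : D.P a b = D.pr a b := rfl
theorem P_eps (b : R) : D.P 1 b = epsL D b := by
  simp [epsL, P_apply, mul_assoc]

variable (D) in
/-- The elements `α_m` of `A` representing the functionals `T(w f⁽²⁾_i v_l ·)` on `B`, so that
`α_m` and `β_m` are dual bases for the pairing. -/
noncomputable def al (m : D.ix) : R := D.lam⁻¹ • D.EM1 (D.bd m * D.winv * D.e1 * D.e2)
variable (D) in
/-- The second legs of the coproduct: `Δ(c) = ∑ β_m ⊗ γ_m(c)`. The map `γ_m` is the transpose of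
left multiplication by `α_m`. -/
noncomputable def ga (m : D.ix) : R →ₗ[k] R :=
  LinearMap.mulLeft k D.winv ∘ₗ D.Q ∘ₗ LinearMap.mulRight k (D.al m) ∘ₗ
    LinearMap.mulLeft k (D.e1 * D.w)
theorem ga_apply (m : D.ix) (c : R) : D.ga m c = D.winv * D.Q (D.e1 * D.w * c * D.al m) := rfl

theorem al_A (m : D.ix) : D.al m ∈ D.cA := Subalgebra.smul_mem _
  (EM1_A (mul_mem (mul_mem (B_C (mul_mem (bd_B m) wi_B)) e1_C) e2_C)) _
theorem ga_B (m : D.ix) {c : R} (hc : c ∈ D.cB) : D.ga m c ∈ D.cB :=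
  mul_mem wi_B (Q_B (mul_mem (mul_mem (mul_mem e1_C (B_C w_B)) (B_C hc)) (A_C (al_A m))))
theorem ga_V (m : D.ix) {c : R} (hc : c ∈ D.cV) : D.ga m c ∈ D.cV :=
  mul_mem wi_V (Q_V (mul_mem (mul_mem (mul_mem e1_A w_A) (V_A hc)) (al_A m)))

theorem al_e2 (m : D.ix) : D.al m * D.e2 = D.bd m * D.winv * D.e1 * D.e2 := by
  rw [al, smul_mul_assoc, ← D.hPP2]

/-- The pairing with `α_m` is the trace against the dual basis element of `β_m`. -/
theorem P_al (m : D.ix) {b : R} (hb : b ∈ D.cB) : D.P (D.al m) b = D.T (D.bd m * b) := by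
  rw [P_apply, al_e2]
  have h : D.bd m * D.winv * D.e1 * D.e2 * D.e1 * D.w * b
      = D.lam • (D.bd m * D.winv * (D.e1 * (D.w * b))) := by
    calc _ = D.bd m * D.winv * (D.e1 * D.e2 * D.e1) * D.w * b := by simp only [mul_assoc]
      _ = _ := by rw [D.hbraid1]; simp only [mul_assoc, mul_smul_comm, smul_mul_assoc]
  have h2 : D.w * b * (D.bd m * D.winv) ∈ D.cB :=
    mul_mem (mul_mem w_B hb) (mul_mem (bd_B m) wi_B)
  rw [h, map_smul, smul_eq_mul, D.hT_tr, mul_assoc D.e1, T_e1 h2, D.hT_tr, D.hT_tr (D.bd m)]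
  have h3 : D.bd m * D.winv * (D.w * b) = D.bd m * b := by
    rw [mul_assoc, ← mul_assoc D.winv, wi_w, one_mul]
  rw [h3, D.hT_tr]
  have := D.lam_ne
  field_simp

/-- Expansion of `B` in the basis `β` with coefficients given by the pairing. -/
theorem P_al_bt {b : R} (hb : b ∈ D.cB) : ∑ m, D.P (D.al m) b • D.bt m = b := by
  simp only [P_al _ hb]; exact dualB2 hb

theorem P_Q {a b : R} (hb : b ∈ D.cB) :
    D.P a b = D.lam⁻¹ * D.T (D.Q (a * D.e2 * D.e1) * D.w * b) := by
  rw [P_apply, mul_assoc (D.Q _), T_Q (mul_mem w_B hb), ← mul_assoc (a * D.e2 * D.e1)]; ring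

/-- Expansion of `A` in the basis `α` with coefficients given by the pairing. -/
theorem P_bt_al {a : R} (ha : a ∈ D.cA) : ∑ m, D.P a (D.bt m) • D.al m = a := by
  have h0 : D.Q (a * D.e2 * D.e1) ∈ D.cB := Q_B (mul_mem (mul_mem (A_C ha) e2_C) e1_C)
  calc ∑ m, D.P a (D.bt m) • D.al m
      = (D.lam⁻¹ * D.lam⁻¹) • D.EM1 ((∑ m, D.T (D.Q (a * D.e2 * D.e1) * D.w * D.bt m) • D.bd m)
          * D.winv * D.e1 * D.e2) := by
        simp only [Finset.sum_mul, map_sum, Finset.smul_sum, smul_mul_assoc, map_smul]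
        refine Finset.sum_congr rfl fun m _ => ?_
        rw [P_Q (bt_B m), al, smul_smul, smul_smul]
        congr 1; ring
    _ = a := by
        rw [dualB1 (mul_mem h0 w_B), mul_assoc _ D.w, w_wi, mul_one, rec_A ha, smul_smul]
        have := D.lam_ne
        rw [show D.lam⁻¹ * D.lam⁻¹ * D.lam ^ 2 = 1 by field_simp, one_smul]

/-- Pairing with `w⁻¹ Q(e₁ c)` extends the formula for the pairing from `B` to elements `c` of `C`. -/
theorem P_wiQ (a : R) {c : R} (hc : c ∈ D.cC) :
    D.P a (D.winv * D.Q (D.e1 * c)) = D.lam⁻¹ ^ 2 * D.T (a * D.e2 * (D.e1 * c)) := by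
  rw [P_apply]
  have : a * D.e2 * D.e1 * D.w * (D.winv * D.Q (D.e1 * c))
      = a * D.e2 * (D.e1 * D.Q (D.e1 * c)) := by
    calc _ = a * D.e2 * D.e1 * (D.w * D.winv) * D.Q (D.e1 * c) := by simp only [mul_assoc]
      _ = _ := by rw [w_wi, mul_one]; simp only [mul_assoc]
  rw [this, e1_mul_Q hc]

/-- `γ_m` is the transpose of left multiplication by `α_m` under the pairing. -/
theorem P_ga (m : D.ix) (a : R) {c : R} (hc : c ∈ D.cB) :
    D.P a (D.ga m c) = D.P (D.al m * a) c := by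
  rw [ga_apply, mul_assoc D.e1, mul_assoc D.e1, P_wiQ a
    (mul_mem (mul_mem (B_C w_B) (B_C hc)) (A_C (al_A m))), P_apply, D.hT_tr]
  congr 1
  rw [D.hT_tr, ← mul_assoc D.e1, ← mul_assoc, D.hT_tr]
  simp only [mul_assoc]

theorem Δ_sq2 {c : R} (hc : c ∈ D.cB) : D.Δ c ∈ sq2 D.cB := by
  simp only [sq2, mem_cB]; exact D.hΔ_mem c (mem_cB.1 hc)

/-- The defining property of `Δ`, for a representation-free functional. -/
theorem ev_Δ {a a' c : R} (ha : a ∈ D.cA) (ha' : a' ∈ D.cA) (hc : c ∈ D.cB) :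
    ev (D.P a) (D.P a') (D.Δ c) = D.P (a * a') c := by
  obtain ⟨m, x, y, h⟩ := exists_fin_rep (D.Δ c)
  have := D.hΔ_def a (mem_cA.1 ha).1 (mem_cA.1 ha).2 a' (mem_cA.1 ha').1 (mem_cA.1 ha').2 c
    (mem_cB.1 hc) m x y h
  rw [h, map_sum]
  simp only [ev_tmul]
  exact this

/-- The explicit coproduct. -/
theorem Δ_eq {c : R} (hc : c ∈ D.cB) : D.Δ c = ∑ m, D.bt m ⊗ₜ[k] D.ga m c := by
  rw [rep_sq2 (α := fun i => D.P (D.al i)) (fun b hb => P_al_bt hb) (Δ_sq2 hc)]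
  refine Finset.sum_congr rfl fun i _ => ?_
  conv_rhs => rw [← P_al_bt (ga_B i hc)]
  rw [TensorProduct.tmul_sum]
  refine Finset.sum_congr rfl fun j _ => ?_
  rw [ev_Δ (al_A i) (al_A j) hc, P_ga i _ hc, TensorProduct.tmul_smul]

/-- The coproduct of `B` is dual to the product of `A`. -/
theorem P_mul {a a' c : R} (ha : a ∈ D.cA) (ha' : a' ∈ D.cA) (hc : c ∈ D.cB) :
    ∑ m, D.P a (D.bt m) * D.P a' (D.ga m c) = D.P (a * a') c := by
  rw [← ev_Δ ha ha' hc, Δ_eq hc, map_sum]; rfl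

/-! ### The trace form of the coproduct -/

/-- The element of `B` representing the functional `T(· Y)` on `A` under the pairing, in closed form. -/
theorem sum_al {Y : R} (hY : Y ∈ D.cA) :
    ∑ m, D.T (D.al m * Y) • D.bt m = D.winv * D.Q (D.e1 * D.e2 * Y) := by
  have hB : D.winv * D.Q (D.e1 * D.e2 * Y) ∈ D.cB :=
    mul_mem wi_B (Q_B (mul_mem (mul_mem e1_C e2_C) (A_C hY)))
  conv_rhs => rw [← P_al_bt hB]
  refine Finset.sum_congr rfl fun m _ => ?_
  congr 1
  rw [mul_assoc D.e1, P_wiQ _ (mul_mem e2_C (A_C hY))]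
  have h : D.al m * D.e2 * (D.e1 * (D.e2 * Y)) = D.lam • (D.al m * D.e2 * Y) := by
    calc _ = D.al m * (D.e2 * D.e1 * D.e2) * Y := by simp only [mul_assoc]
      _ = _ := by rw [D.hbraid2]; simp only [mul_assoc, mul_smul_comm, smul_mul_assoc]
  rw [h, map_smul, D.hT_tr (D.al m * D.e2), ← mul_assoc, T_e2 (A_M1 (mul_mem hY (al_A m))), D.hT_tr, smul_eq_mul]
  have := D.lam_ne
  field_simp

/-- The trace of the coproduct of `c` against `a e₂ a'` on the first leg and `d ∈ B` on the second.
Multiplicativity, both weak counit identities and the antipode identities of `B` are all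
specializations of this formula. -/
theorem core {a a' c d : R} (ha : a ∈ D.cA) (ha' : a' ∈ D.cA) (hc : c ∈ D.cB) (hd : d ∈ D.cB) :
    ∑ m, D.T (D.bt m * a * D.e2 * a') * D.T (D.ga m c * d)
      = D.lam * D.T (c * a * d * D.winv * a') := by
  have hl := D.lam_ne
  set Y := D.EM1 (d * D.winv * D.e1 * D.w * c) with hYdef
  have hY : Y ∈ D.cA :=
    EM1_A (mul_mem (mul_mem (mul_mem (B_C (mul_mem hd wi_B)) e1_C) (B_C w_B)) (B_C hc))
  have h1 : ∀ m, D.T (D.ga m c * d) = D.lam⁻¹ * D.T (D.al m * Y) := fun m => by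
    rw [hYdef, T_EM1_r (A_M1 (al_A m)), ga_apply, mul_assoc, D.hT_tr, mul_assoc,
      T_Q (mul_mem hd wi_B), D.hT_tr]
    rw [D.hT_tr (D.al m)]; simp only [mul_assoc]
  have h2 : ∑ m, D.T (D.bt m * a * D.e2 * a') * D.T (D.ga m c * d)
      = D.lam⁻¹ * D.T (D.winv * D.Q (D.e1 * D.e2 * Y) * a * D.e2 * a') := by
    rw [← sum_al hY]
    simp only [h1, Finset.sum_mul, map_sum, Finset.mul_sum, smul_mul_assoc, map_smul, smul_eq_mul]
    exact Finset.sum_congr rfl fun m _ => by ring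
  have h3 : ∀ i, D.T (a' * D.winv * (D.xb i * (D.e1 * D.e2 * Y) * D.yb i) * a * D.e2)
      = D.lam ^ 2 * D.T (d * D.winv * (a' * D.winv * (D.xb i * D.e1 * D.yb i) * D.w * c * a)) := by
    intro i
    have hx := D.hxb i
    have hy := D.hyb i
    have hx1 := D.hMM1 hx
    have hy1 := D.hMM1 hy
    have hYa : Y * D.yb i * a ∈ D.M1 := mul_mem (mul_mem (A_M1 hY) hy1) (A_M1 ha)
    have hax : a' * D.winv * D.xb i ∈ D.M1 := mul_mem (mul_mem (A_M1 ha') wi_V.1) hx1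
    have haxe : a' * D.winv * D.xb i * D.e1 ∈ D.M1 := mul_mem hax D.he1_mem
    set q := D.EM (a' * D.winv * D.xb i * D.e1) with hq
    have hqM : q ∈ D.M := D.hEM_mem _ haxe
    have hqe : q * D.e1 = D.lam • (a' * D.winv * D.xb i * D.e1) := by
      rw [D.hPP1 _ hax, smul_smul, mul_inv_cancel₀ hl, one_smul]
    set m := D.EM (Y * D.yb i * a) with hm
    have hmM : m ∈ D.M := D.hEM_mem _ hYa
    calc _ = D.T (a' * D.winv * D.xb i * D.e1 * (D.e2 * (Y * D.yb i * a) * D.e2)) := by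
          simp only [mul_assoc]
      _ = D.T (a' * D.winv * D.xb i * D.e1 * m * D.e2) := by
          rw [D.he2_jones _ hYa, D.he2_jones' _ hYa]; simp only [mul_assoc, hm]
      _ = D.lam * D.T (a' * D.winv * D.xb i * D.e1 * m) := by
          rw [T_e2 (mul_mem haxe (D.hMM1 hmM))]
      _ = D.lam * D.T (q * (Y * D.yb i * a)) := by
          rw [hq, D.hT_tr, ← T_EM_r haxe hmM, ← hq, D.hT_tr, hm, T_EM_r hYa hqM]
      _ = D.lam * D.T ((d * D.winv * D.e1 * D.w * c) * (D.yb i * a * q)) := by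
          rw [D.hT_tr q, mul_assoc, mul_assoc, hYdef,
            T_EM1_l (mul_mem hy1 (mul_mem (A_M1 ha) (D.hMM1 hqM))), mul_assoc (D.yb i)]
      _ = D.lam * D.T (d * D.winv * (q * D.e1) * D.yb i * (D.w * c * a)) := by
          congr 1
          have e1 : D.w * c * D.yb i = D.yb i * (D.w * c) := commB (mul_mem w_B hc) hy
          have e2 : d * D.winv * q = q * (d * D.winv) := commB (mul_mem hd wi_B) hqM
          calc _ = D.T (d * D.winv * D.e1 * (D.w * c * D.yb i) * a * q) := by simp only [mul_assoc]
            _ = D.T ((q * (d * D.winv)) * D.e1 * D.yb i * (D.w * c * a)) := by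
              rw [e1, D.hT_tr]; simp only [mul_assoc]
            _ = _ := by rw [← e2]; simp only [mul_assoc]
      _ = _ := by
          rw [hqe]; simp only [mul_smul_comm, smul_mul_assoc, map_smul, smul_eq_mul, mul_assoc]
          ring
  have h4 : D.T (D.winv * D.Q (D.e1 * D.e2 * Y) * a * D.e2 * a')
      = D.T (a' * D.winv * D.Q (D.e1 * D.e2 * Y) * a * D.e2) := by
    rw [D.hT_tr]; simp only [mul_assoc]
  rw [h2, h4, Q_apply, Finset.mul_sum, Finset.sum_mul, Finset.sum_mul, map_sum]
  simp only [h3]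
  rw [← Finset.mul_sum, ← map_sum]
  simp only [← Finset.mul_sum, ← Finset.sum_mul]
  rw [sum_xey, mul_one]
  have h5 : d * D.winv * (a' * D.winv * D.w * c * a) = d * D.winv * a' * (c * a) := by
    calc _ = d * D.winv * (a' * (D.winv * D.w) * c * a) := by simp only [mul_assoc]
      _ = _ := by rw [wi_w, mul_one]; simp only [mul_assoc]
  rw [h5, D.hT_tr, ← mul_assoc, ← mul_assoc]
  field_simp
  simp only [mul_assoc]

end D2H

namespace D2H
variable {k : Type*} [Field k] {R : Type*} [Ring R] [Algebra k R] {D : D2H k R}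

/-- Elements of `B ⊗ B` are separated by pairs of elements of `A`. -/
theorem extB {X Y : R ⊗[k] R} (hX : X ∈ sq2 D.cB) (hY : Y ∈ sq2 D.cB)
    (h : ∀ a ∈ D.cA, ∀ a' ∈ D.cA, ev (D.P a) (D.P a') X = ev (D.P a) (D.P a') Y) : X = Y :=
  ext_sq2 (α := fun i => D.P (D.al i)) (fun _ hb => P_al_bt hb) hX hY
    fun i j => h _ (al_A i) _ (al_A j)

theorem sepP {b b' : R} (hb : b ∈ D.cB) (hb' : b' ∈ D.cB)
    (h : ∀ a ∈ D.cA, D.P a b = D.P a b') : b = b' := by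
  rw [← P_al_bt hb, ← P_al_bt hb']
  simp only [h _ (al_A _)]

/-! ### Multiplicativity of the coproduct -/

/-- The commutation rule of `B` past `A`: `c a = λ⁻¹ ∑ E_{M₁}(c₍₁₎ a e₂) c₍₂₎`, in which `B` acts on `A`
by `c ▷ a = λ⁻¹ E_{M₁}(c a e₂)`. -/
theorem P1 {a c : R} (ha : a ∈ D.cA) (hc : c ∈ D.cB) :
    ∑ j, D.EM1 (D.bt j * a * D.e2) * D.ga j c = D.lam • (c * a) := by
  rw [← sub_eq_zero]
  have hm : ∀ j, D.EM1 (D.bt j * a * D.e2) ∈ D.cC := fun j =>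
    A_C (EM1_A (mul_mem (mul_mem (B_C (bt_B j)) (A_C ha)) e2_C))
  refine sepC (D := D) ?_ ?_
  · exact sub_mem (sum_mem fun j _ => mul_mem (hm j) (B_C (ga_B j hc)))
      (Subalgebra.smul_mem _ (mul_mem (B_C hc) (A_C ha)) _)
  intro d hd a' ha'
  have hv : ∀ m, D.EM1 (D.bd m * d) ∈ D.cV := fun m => EM1_V (mul_mem (bd_B m) hd)
  have h1 : ∀ j m, D.T (D.EM1 (D.bt j * a * D.e2) * D.bd m * d * a')
      = D.T (D.bt j * a * D.e2 * (D.EM1 (D.bd m * d) * a')) := by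
    intro j m
    rw [mul_assoc _ (D.bd m), mul_assoc, ← T_EM1_r (D.hEM1_mem _), D.hEM1_right _ (A_M1 ha'),
      T_EM1_l (mul_mem (hv m).1 (A_M1 ha'))]
  have h2 : ∀ j, D.T (D.EM1 (D.bt j * a * D.e2) * D.ga j c * d * a')
      = ∑ m, D.T (D.bt j * a * D.e2 * (D.EM1 (D.bd m * d) * a')) * D.T (D.ga j c * D.bt m) := by
    intro j
    conv_lhs => rw [← dualB1 (ga_B j hc)]
    simp only [Finset.mul_sum, Finset.sum_mul, map_sum, mul_smul_comm, smul_mul_assoc, map_smul,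
      smul_eq_mul, h1]
    exact Finset.sum_congr rfl fun m _ => mul_comm _ _
  rw [sub_mul, sub_mul, map_sub, Finset.sum_mul, Finset.sum_mul, map_sum]
  simp only [h2]
  rw [Finset.sum_comm]
  have h3 : ∀ m, ∑ j, D.T (D.bt j * a * D.e2 * (D.EM1 (D.bd m * d) * a')) *
      D.T (D.ga j c * D.bt m) = D.lam * D.T (c * a * (D.bt m * D.winv * D.EM1 (D.bd m * d)) * a') := by
    intro m
    rw [core ha (mul_mem (V_A (hv m)) ha') hc (bt_B m)]
    simp only [mul_assoc]
  simp only [h3]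
  rw [← Finset.mul_sum, ← map_sum, ← Finset.sum_mul, ← Finset.mul_sum, K1]
  simp

/-- Right multiplication by `b'` on `B` is transposed to the action `b' ▷ a = λ⁻¹ E_{M₁}(b' a e₂)`
on `A`. -/
theorem P_mulB {a b b' : R} :
    D.P a (b * b') = D.lam⁻¹ * D.P (D.EM1 (b' * a * D.e2)) b := by
  rw [P_apply, P_apply, PP2]
  have hl := D.lam_ne
  simp only [smul_mul_assoc, map_smul, smul_eq_mul]
  rw [← mul_assoc, D.hT_tr _ b']
  simp only [mul_assoc]
  field_simp

/-- Pairing both sides with `a ⊗ a'` and transposing, this says that `B` acts on products by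
`b ▷ (a a') = (b₍₁₎ ▷ a)(b₍₂₎ ▷ a')`, which is `P1` followed by `E_{M₁}(· a' e₂)`. -/
theorem Δ_mul {b c : R} (hb : b ∈ D.cB) (hc : c ∈ D.cB) : D.Δ (b * c) = D.Δ b * D.Δ c := by
  apply extB (Δ_sq2 (mul_mem hb hc)) (mul_sq2 (Δ_sq2 hb) (Δ_sq2 hc))
  intro a ha a' ha'
  rw [ev_Δ ha ha' (mul_mem hb hc), Δ_eq hb, Δ_eq hc, Finset.sum_mul_sum]
  simp only [Algebra.TensorProduct.tmul_mul_tmul, map_sum, ev_tmul, P_mulB]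
  rw [Finset.sum_comm]
  have h : ∀ l, ∑ j, D.lam⁻¹ * D.P (D.EM1 (D.bt l * a * D.e2)) (D.bt j) *
      (D.lam⁻¹ * D.P (D.EM1 (D.ga l c * a' * D.e2)) (D.ga j b))
      = D.lam⁻¹ * D.lam⁻¹ *
        D.P (D.EM1 (D.EM1 (D.bt l * a * D.e2) * D.ga l c * a' * D.e2)) b := by
    intro l
    have h1 : D.EM1 (D.bt l * a * D.e2) ∈ D.cA :=
      EM1_A (mul_mem (mul_mem (B_C (bt_B l)) (A_C ha)) e2_C)
    have h2 : D.EM1 (D.ga l c * a' * D.e2) ∈ D.cA :=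
      EM1_A (mul_mem (mul_mem (B_C (ga_B l hc)) (A_C ha')) e2_C)
    rw [mul_assoc _ (D.ga l c), mul_assoc (D.EM1 _), D.hEM1_left _ (A_M1 h1), ← P_mul h1 h2 hb,
      Finset.mul_sum]
    exact Finset.sum_congr rfl fun j _ => by ring
  simp only [h]
  rw [← Finset.mul_sum, ← LinearMap.sum_apply, ← map_sum, ← map_sum, ← Finset.sum_mul,
    ← Finset.sum_mul, P1 ha hc]
  have hl := D.lam_ne
  simp only [smul_mul_assoc, map_smul, LinearMap.smul_apply, smul_eq_mul, mul_assoc]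
  field_simp

/-- Coassociativity, in terms of the second legs. -/
theorem Δ_ga (i : D.ix) {h : R} (hh : h ∈ D.cB) :
    D.Δ (D.ga i h) = ∑ j, D.ga i (D.bt j) ⊗ₜ[k] D.ga j h := by
  apply extB (Δ_sq2 (ga_B i hh))
    (sum_mem fun j _ => tmul_sq2 (ga_B i (bt_B j)) (ga_B j hh))
  intro a ha a' ha'
  rw [ev_Δ ha ha' (ga_B i hh), P_ga i _ hh, map_sum]
  simp only [ev_tmul, P_ga i _ (bt_B _)]
  rw [P_mul (mul_mem (al_A i) ha) ha' hh, mul_assoc]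

/-! ### Counit -/

theorem one_B : (1 : R) ∈ D.cB := one_mem _
theorem one_A : (1 : R) ∈ D.cA := one_mem _

theorem counit_l {h : R} (hh : h ∈ D.cB) : ∑ j, epsL D (D.bt j) • D.ga j h = h := by
  apply sepP (sum_mem fun j _ => Subalgebra.smul_mem _ (ga_B j hh) _) hh
  intro a ha
  simp only [map_sum, map_smul, ← P_eps, smul_eq_mul]
  rw [P_mul one_A ha hh, one_mul]

theorem counit_r {h : R} (hh : h ∈ D.cB) : ∑ j, epsL D (D.ga j h) • D.bt j = h := by
  apply sepP (sum_mem fun j _ => Subalgebra.smul_mem _ (bt_B j) _) hh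
  intro a ha
  simp only [map_sum, map_smul, ← P_eps, smul_eq_mul]
  rw [← mul_one a, ← P_mul ha one_A hh, mul_one]
  exact Finset.sum_congr rfl fun j _ => mul_comm _ _

/-- The counit as a trace, from the Markov property `T_e1`. -/
theorem eps_T {b : R} (hb : b ∈ D.cB) : epsL D b = D.lam⁻¹ * D.T (b * D.e2 * D.w) := by
  have hl := D.lam_ne
  have h : D.T (D.e2 * D.e1 * D.w * b) = D.T (D.e1 * (D.w * b * D.e2)) := by
    rw [mul_assoc, mul_assoc, D.hT_tr]; simp only [mul_assoc]
  rw [← P_eps, P_apply, one_mul, h, T_e1 (mul_mem (mul_mem w_B hb) e2_B), mul_assoc D.w,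
    D.hT_tr D.w]
  field_simp

/-- The identity `ε(h g f) = ε(h g₍₁₎) ε(g₍₂₎ f)`, the case `a = 1`, `a' = E_{M₁}(e₂ w h)` of `core`. -/
theorem wk_counit1 {h g f : R} (hh : h ∈ D.cB) (hg : g ∈ D.cB) (hf : f ∈ D.cB) :
    ∑ j, epsL D (h * D.bt j) * epsL D (D.ga j g * f) = epsL D (h * g * f) := by
  have hl := D.lam_ne
  have hv : D.EM1 (D.e2 * D.w * h) ∈ D.cV := EM1_V (mul_mem (mul_mem e2_B w_B) hh)
  have h1 : ∀ j, epsL D (h * D.bt j) = D.lam⁻¹ * D.lam⁻¹ *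
      D.T (D.bt j * 1 * D.e2 * D.EM1 (D.e2 * D.w * h)) := fun j => by
    rw [eps_T (mul_mem hh (bt_B j)), mul_one, mul_assoc D.e2, mul_assoc (D.bt j), PP2',
      mul_smul_comm, map_smul, smul_eq_mul, mul_assoc, mul_assoc, D.hT_tr h]
    simp only [mul_assoc]; field_simp
  have h2 : ∀ j, epsL D (D.ga j g * f) = D.lam⁻¹ * D.T (D.ga j g * (f * D.e2 * D.w)) := fun j => by
    rw [eps_T (mul_mem (ga_B j hg) hf)]; simp only [mul_assoc]
  simp only [h1, h2]
  have h3 := core (D := D) one_A (V_A hv) hg (mul_mem (mul_mem hf e2_B) w_B)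
  calc _ = D.lam⁻¹ ^ 3 * ∑ j, D.T (D.bt j * 1 * D.e2 * D.EM1 (D.e2 * D.w * h)) *
        D.T (D.ga j g * (f * D.e2 * D.w)) := by
        rw [Finset.mul_sum]; exact Finset.sum_congr rfl fun j _ => by ring
    _ = D.lam⁻¹ ^ 2 * D.T (g * (f * D.e2) * (D.w * D.winv) * D.EM1 (D.e2 * D.w * h)) := by
        rw [h3]; simp only [mul_assoc, one_mul]; field_simp
    _ = _ := by
        rw [w_wi, mul_one, mul_assoc D.e2, mul_assoc, mul_assoc f, PP2', eps_T
          (mul_mem (mul_mem hh hg) hf), mul_assoc h, mul_assoc h, mul_assoc h, D.hT_tr h]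
        simp only [mul_smul_comm, map_smul, smul_eq_mul, mul_assoc]; field_simp

/-- The identity `ε(h g f) = ε(h g₍₂₎) ε(g₍₁₎ f)`, the case `a = E_{M₁}(f e₂)`, `a' = w` of `core`. -/
theorem wk_counit2 {h g f : R} (hh : h ∈ D.cB) (hg : g ∈ D.cB) (hf : f ∈ D.cB) :
    ∑ j, epsL D (h * D.ga j g) * epsL D (D.bt j * f) = epsL D (h * g * f) := by
  have hl := D.lam_ne
  have hv : D.EM1 (f * D.e2) ∈ D.cV := EM1_V (mul_mem hf e2_B)
  have h1 : ∀ j, epsL D (h * D.ga j g) = D.lam⁻¹ * D.T (D.ga j g * (D.e2 * D.w * h)) := fun j => by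
    rw [eps_T (mul_mem hh (ga_B j hg)), mul_assoc, mul_assoc, D.hT_tr h]; simp only [mul_assoc]
  have h2 : ∀ j, epsL D (D.bt j * f) = D.lam⁻¹ * D.lam⁻¹ *
      D.T (D.bt j * D.EM1 (f * D.e2) * D.e2 * D.w) := fun j => by
    rw [eps_T (mul_mem (bt_B j) hf), mul_assoc (D.bt j) (D.EM1 _), PP2]
    simp only [mul_smul_comm, smul_mul_assoc, map_smul, smul_eq_mul, mul_assoc]; field_simp
  simp only [h1, h2]
  have h3 := core (D := D) (V_A hv) w_A hg (mul_mem (mul_mem e2_B w_B) hh)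
  calc _ = D.lam⁻¹ ^ 3 * ∑ j, D.T (D.bt j * D.EM1 (f * D.e2) * D.e2 * D.w) *
        D.T (D.ga j g * (D.e2 * D.w * h)) := by
        rw [Finset.mul_sum]; exact Finset.sum_congr rfl fun j _ => by ring
    _ = D.lam⁻¹ ^ 2 * D.T (g * (D.EM1 (f * D.e2) * D.e2) * D.w * h * (D.winv * D.w)) := by
        rw [h3]; simp only [mul_assoc]; field_simp
    _ = _ := by
        rw [wi_w, mul_one, PP2, eps_T (mul_mem (mul_mem hh hg) hf), mul_assoc h, mul_assoc h,
          mul_assoc h, D.hT_tr h]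
        simp only [mul_smul_comm, smul_mul_assoc, map_smul, smul_eq_mul, mul_assoc]; field_simp

/-! ### The coproduct on `V` -/

/-- Right multiplication by `v ∈ V` on `B` is transposed to left multiplication by `v` on `A`. -/
theorem P_V_r {a b v : R} (ha : a ∈ D.cA) (hv : v ∈ D.cV) : D.P a (b * v) = D.P (v * a) b := by
  have hl := D.lam_ne
  rw [P_mulB, EM1_e2 (mul_mem hv.1 (A_M1 ha)), map_smul, LinearMap.smul_apply, smul_eq_mul]
  field_simp

/-- Left multiplication by `v ∈ V` on `B` is transposed to left multiplication on `A` by the element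
`λ⁻¹ E_M(e₁ v)` of `U`, since `e₁ v = λ⁻¹ e₁ E_M(e₁ v)` and `U` commutes with `B`. -/
theorem P_V_l {a b v : R} (hb : b ∈ D.cB) (hv : v ∈ D.cV) :
    D.P a (v * b) = D.P (D.lam⁻¹ • D.EM (D.e1 * v) * a) b := by
  have hu : D.EM (D.e1 * v) ∈ D.cU := EM_U (mul_mem e1_A (V_A hv))
  rw [P_apply, P_apply]
  congr 1
  calc _ = D.T (a * D.e2 * (D.e1 * v) * (D.w * b)) := by
        rw [mul_assoc _ D.w, ← mul_assoc D.w, w_central hv]; simp only [mul_assoc]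
    _ = D.T (a * D.e2 * (D.lam⁻¹ • (D.e1 * (D.EM (D.e1 * v) * (D.w * b))))) := by
        conv_lhs => rw [D.hPP1' _ hv.1]
        simp only [mul_smul_comm, smul_mul_assoc, mul_assoc]
    _ = _ := by
        rw [← commB (mul_mem w_B hb) hu.1]
        simp only [mul_smul_comm, smul_mul_assoc, map_smul, smul_eq_mul]
        congr 1
        rw [← mul_assoc, ← mul_assoc, ← mul_assoc, D.hT_tr]; simp only [mul_assoc]

theorem one_V : (1 : R) ∈ D.cV := one_mem _

/-- On `V` the coproduct is `Δ(v) = 1₍₁₎ v ⊗ 1₍₂₎`. -/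
theorem Δ_V_r {v : R} (hv : v ∈ D.cV) :
    D.Δ v = ∑ l, (D.bt l * v) ⊗ₜ[k] D.ga l 1 := by
  apply extB (Δ_sq2 (V_B hv))
    (sum_mem fun l _ => tmul_sq2 (mul_mem (bt_B l) (V_B hv)) (ga_B l one_B))
  intro a ha a' ha'
  simp only [map_sum, ev_tmul, P_V_r ha hv]
  rw [ev_Δ ha ha' (V_B hv), P_mul (mul_mem (V_A hv) ha) ha' one_B, mul_assoc,
    ← P_V_r (mul_mem ha ha') hv, one_mul]

/-- On `V` the coproduct is `Δ(v) = v 1₍₁₎ ⊗ 1₍₂₎`. As `γ_l(1) ∈ V`, this and `Δ_V_r` give the two weak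
unit identities. -/
theorem Δ_V_l {v : R} (hv : v ∈ D.cV) :
    D.Δ v = ∑ l, (v * D.bt l) ⊗ₜ[k] D.ga l 1 := by
  have hu : D.lam⁻¹ • D.EM (D.e1 * v) ∈ D.cU :=
    Subalgebra.smul_mem _ (EM_U (mul_mem e1_A (V_A hv))) _
  apply extB (Δ_sq2 (V_B hv))
    (sum_mem fun l _ => tmul_sq2 (mul_mem (V_B hv) (bt_B l)) (ga_B l one_B))
  intro a ha a' ha'
  simp only [map_sum, ev_tmul, P_V_l (bt_B _) hv]
  rw [ev_Δ ha ha' (V_B hv), P_mul (mul_mem (U_A hu) ha) ha' one_B, mul_assoc,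
    ← P_V_l one_B hv, mul_one]

end D2H

section tensor2
variable {k : Type*} [Field k] {R : Type*} [Ring R] [Algebra k R]

/-- The product `(X ⊗ 1)(1 ⊗ X)` in coordinates. -/
theorem three1 {ι : Type*} [Fintype ι] {X : R ⊗[k] R} {x y : ι → R} (h : X = ∑ j, x j ⊗ₜ[k] y j) :
    ∑ j, ∑ j', (x j ⊗ₜ[k] (y j * x j')) ⊗ₜ[k] y j'
      = (X ⊗ₜ[k] (1 : R)) * (TensorProduct.assoc k R R R).symm ((1 : R) ⊗ₜ[k] X) := by
  simp only [h, TensorProduct.sum_tmul, TensorProduct.tmul_sum, map_sum,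
    TensorProduct.assoc_symm_tmul, Finset.sum_mul_sum, Algebra.TensorProduct.tmul_mul_tmul,
    mul_one, one_mul]

/-- The product `(1 ⊗ X)(X ⊗ 1)` in coordinates. -/
theorem three2 {ι : Type*} [Fintype ι] {X : R ⊗[k] R} {x y : ι → R} (h : X = ∑ j, x j ⊗ₜ[k] y j) :
    ∑ j, ∑ j', (x j' ⊗ₜ[k] (x j * y j')) ⊗ₜ[k] y j
      = (TensorProduct.assoc k R R R).symm ((1 : R) ⊗ₜ[k] X) * (X ⊗ₜ[k] (1 : R)) := by
  simp only [h, TensorProduct.sum_tmul, TensorProduct.tmul_sum, map_sum,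
    TensorProduct.assoc_symm_tmul, Finset.sum_mul_sum, Algebra.TensorProduct.tmul_mul_tmul,
    mul_one, one_mul]
end tensor2

/-! ### The antipode of `B` -/

namespace D2H
variable {k : Type*} [Field k] {R : Type*} [Ring R] [Algebra k R] {D : D2H k R}

theorem S_B {b : R} (hb : b ∈ D.cB) : D.S b ∈ D.cB := mem_cB.2 (D.hS_mem b (mem_cB.1 hb))

/-- The defining property of the antipode, with `w` moved to the right-hand side. -/
theorem T_S {a b : R} (ha : a ∈ D.cA) (hb : b ∈ D.cB) :
    D.T (D.S b * (D.e1 * D.e2 * a)) = D.T (b * (D.winv * a * D.e2 * (D.e1 * D.w))) := by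
  have hl := D.lam_ne
  have hwa : D.winv * a ∈ D.cA := mul_mem wi_A ha
  have h := D.hS_def _ (mem_cA.1 hwa).1 (mem_cA.1 hwa).2 b (mem_cB.1 hb)
  rw [mul_right_inj' (pow_ne_zero 2 (inv_ne_zero hl))] at h
  have h1 : D.S b * (D.e1 * D.e2 * a) = D.S b * D.e1 * D.e2 * D.w * (D.winv * a) := by
    rw [mul_assoc _ D.w, ← mul_assoc D.w, w_wi, one_mul]; simp only [mul_assoc]
  rw [h1, ← h, D.hT_tr b]
  simp only [mul_assoc]

/-- The antipode exchanges the two sides of `e₂`, up to conjugation by `w`. It extends the defining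
property `T_S`, in which the left factor is `e₁`, to any left factor in `A`. -/
theorem S_swap {a a' c : R} (ha : a ∈ D.cA) (ha' : a' ∈ D.cA) (hc : c ∈ D.cB) :
    D.T (D.S c * (a * D.e2 * a')) = D.T (D.w * c * D.winv * a' * D.e2 * a) := by
  have hl := D.lam_ne
  have hae : a * D.e2 * a' ∈ D.cC := mul_mem (mul_mem (A_C ha) e2_C) (A_C ha')
  have hX : D.Q (a * D.e2 * a') ∈ D.cB := Q_B hae
  set Z := D.EM1 (D.e2 * D.e1 * D.Q (a * D.e2 * a')) with hZ
  have hZA : Z ∈ D.cA := EM1_A (mul_mem (mul_mem e2_C e1_C) (B_C hX))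
  have hwc : D.w * c * D.winv ∈ D.cB := mul_mem (mul_mem w_B hc) wi_B
  have h1 : D.T (D.S c * (a * D.e2 * a')) =
      D.lam⁻¹ ^ 2 * D.T (c * (D.winv * Z * D.e2 * (D.e1 * D.w))) := by
    have h2 := T_Q' (D := D) (S_B hc) (a * D.e2 * a')
    have h3 := rec_r (D := D) hX
    have h4 := T_Q' (D := D) (S_B hc) (D.e1 * D.e2 * Z)
    rw [h3, mul_smul_comm, map_smul, smul_eq_mul, h2, T_S hZA hc] at h4
    field_simp at h4 ⊢
    exact h4
  have h5 : Z = D.lam • ∑ i, D.EM (D.e1 * D.xb i * a) * a' * D.yb i := by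
    rw [hZ, Q_apply, Finset.mul_sum, map_sum, Finset.smul_sum]
    refine Finset.sum_congr rfl fun i _ => ?_
    have hx : D.e1 * D.xb i * a ∈ D.M1 := mul_mem (mul_mem D.he1_mem (D.hMM1 (D.hxb i))) (A_M1 ha)
    calc _ = D.EM1 (D.e2 * (D.e1 * D.xb i * a) * D.e2 * (a' * D.yb i)) := by simp only [mul_assoc]
      _ = D.EM1 (D.EM (D.e1 * D.xb i * a) * D.e2 * (a' * D.yb i)) := by
          rw [D.he2_jones _ hx, D.he2_jones' _ hx]
      _ = _ := by
          rw [D.hEM1_e2 _ (D.hMM1 (D.hEM_mem _ hx)) _ (mul_mem (A_M1 ha') (D.hMM1 (D.hyb i)))]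
          simp only [mul_assoc]
  have h6 : ∀ i, D.T (c * (D.winv * (D.EM (D.e1 * D.xb i * a) * a' * D.yb i) * D.e2 * (D.e1 * D.w)))
      = D.lam * D.T (D.e1 * (D.xb i * (a * (D.w * c * D.winv) * a' * D.e2) * D.yb i)) := by
    intro i
    have hx : D.e1 * (D.xb i * a) ∈ D.M1 := mul_mem D.he1_mem (mul_mem (D.hMM1 (D.hxb i)) (A_M1 ha))
    have hr := D.hPP1' (D.xb i * a) (mul_mem (D.hMM1 (D.hxb i)) (A_M1 ha))
    rw [mul_assoc D.e1]
    set r := D.EM (D.e1 * (D.xb i * a))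
    have hrM : r ∈ D.M := D.hEM_mem _ hx
    calc _ = D.T ((D.w * c * D.winv * r) * a' * (D.yb i * D.e2) * D.e1) := by
          rw [← mul_assoc, ← mul_assoc, D.hT_tr _ D.w]; simp only [mul_assoc]
      _ = D.T ((D.e1 * r) * (D.w * c * D.winv) * a' * (D.e2 * D.yb i)) := by
          rw [commB hwc hrM, D.he2_M _ (D.hyb i), D.hT_tr]; simp only [mul_assoc]
      _ = _ := by
          have : D.e1 * r = D.lam • (D.e1 * (D.xb i * a)) := by
            rw [hr, smul_smul, mul_inv_cancel₀ hl, one_smul]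
          rw [this]
          simp only [smul_mul_assoc, map_smul, smul_eq_mul, mul_assoc]
  have hY : a * (D.w * c * D.winv) * a' * D.e2 ∈ D.cC :=
    mul_mem (mul_mem (mul_mem (A_C ha) (B_C hwc)) (A_C ha')) e2_C
  have h7 : D.T (c * (D.winv * Z * D.e2 * (D.e1 * D.w)))
      = D.lam ^ 2 * D.T (D.e1 * D.Q (a * (D.w * c * D.winv) * a' * D.e2)) := by
    rw [h5, Q_apply]
    simp only [Finset.mul_sum, Finset.sum_mul, map_sum, mul_smul_comm, smul_mul_assoc, map_smul,
      smul_eq_mul, h6]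
    exact Finset.sum_congr rfl fun i _ => by ring
  have h8 := T_Q (D := D) one_B (a * (D.w * c * D.winv) * a' * D.e2)
  rw [mul_one, mul_one] at h8
  rw [h1, h7, T_e1 (Q_B hY), h8, mul_assoc a, mul_assoc a, D.hT_tr a]
  field_simp

/-- The target counital map of `B` is `h ↦ λ⁻¹ E_{M₁}(h e₂)`, with values in `V`. -/
theorem anti1_rhs {h : R} (hh : h ∈ D.cB) :
    ∑ j, epsL D (D.bt j * h) • D.ga j 1 = D.lam⁻¹ • D.EM1 (h * D.e2) := by
  have hl := D.lam_ne
  have hv : D.EM1 (h * D.e2) ∈ D.cV := EM1_V (mul_mem hh e2_B)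
  rw [← sub_eq_zero]
  refine sepB (D := D) (sub_mem (sum_mem fun j _ => Subalgebra.smul_mem _ (ga_B j one_B) _)
    (Subalgebra.smul_mem _ (V_B hv) _)) ?_
  intro d hd
  have h2 : ∀ j, epsL D (D.bt j * h) = D.lam⁻¹ * D.lam⁻¹ *
      D.T (D.bt j * D.EM1 (h * D.e2) * D.e2 * D.w) := fun j => by
    rw [eps_T (mul_mem (bt_B j) hh), mul_assoc (D.bt j) (D.EM1 _), PP2]
    simp only [mul_smul_comm, smul_mul_assoc, map_smul, smul_eq_mul, mul_assoc]; field_simp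
  have h3 := core (D := D) (V_A hv) w_A one_B hd
  rw [mul_assoc _ D.winv, wi_w, mul_one, one_mul] at h3
  have h4 : D.T ((∑ j, epsL D (D.bt j * h) • D.ga j 1) * d) =
      D.lam⁻¹ ^ 2 * ∑ j, D.T (D.bt j * D.EM1 (h * D.e2) * D.e2 * D.w) * D.T (D.ga j 1 * d) := by
    simp only [Finset.sum_mul, map_sum, smul_mul_assoc, map_smul, smul_eq_mul, Finset.mul_sum, h2]
    exact Finset.sum_congr rfl fun i _ => by ring
  rw [sub_mul, map_sub, h4, h3, smul_mul_assoc, map_smul, smul_eq_mul]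
  field_simp; ring

/-- The form of `core` in which the first leg of the coproduct enters through `E_{M₁}(e₂ α ·)`, and
the second leg is tested against arbitrary `y ∈ C`. -/
theorem core_X {α h y : R} (hα : α ∈ D.cA) (hh : h ∈ D.cB) (hy : y ∈ D.cC) :
    ∑ j, D.T (D.ga j h * (D.winv * D.EM1 (D.e2 * α * D.bt j) * y))
      = D.lam * D.T (h * y * D.winv * α) := by
  have hyb : ∀ m, D.EM1 (y * D.bt m) ∈ D.cA := fun m => EM1_A (mul_mem hy (B_C (bt_B m)))
  have h1 : ∀ j m, D.T (D.bt m * (D.winv * D.EM1 (D.e2 * α * D.bt j) * y))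
      = D.T (D.bt j * (D.EM1 (y * D.bt m) * D.winv) * D.e2 * α) := by
    intro j m
    calc _ = D.T (D.winv * (D.EM1 (D.e2 * α * D.bt j) * (y * D.bt m))) := by
          rw [D.hT_tr]; simp only [mul_assoc]
      _ = D.T (D.EM1 (D.e2 * α * D.bt j) * (y * D.bt m * D.winv)) := by
          rw [D.hT_tr]; simp only [mul_assoc]
      _ = D.T (D.e2 * α * D.bt j * (D.EM1 (y * D.bt m) * D.winv)) := by
          rw [← T_EM1_r (D.hEM1_mem _), D.hEM1_right _ wi_V.1,
            T_EM1_l (mul_mem (A_M1 (hyb m)) wi_V.1)]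
      _ = _ := by
          rw [mul_assoc, D.hT_tr]; simp only [mul_assoc]
  have h2 : ∀ j, D.T (D.ga j h * (D.winv * D.EM1 (D.e2 * α * D.bt j) * y)) =
      ∑ m, D.T (D.bt j * (D.EM1 (y * D.bt m) * D.winv) * D.e2 * α) * D.T (D.ga j h * D.bd m) := by
    intro j
    conv_lhs => rw [← dualB2 (ga_B j hh)]
    simp only [Finset.sum_mul, map_sum, smul_mul_assoc, map_smul, smul_eq_mul, h1]
    exact Finset.sum_congr rfl fun m _ => by rw [mul_comm, D.hT_tr (D.bd m)]
  simp only [h2]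
  rw [Finset.sum_comm]
  have h3 : ∀ m, ∑ j, D.T (D.bt j * (D.EM1 (y * D.bt m) * D.winv) * D.e2 * α) *
      D.T (D.ga j h * D.bd m)
      = D.lam * D.T (h * (D.EM1 (y * D.bt m) * D.winv * D.bd m) * D.winv * α) := by
    intro m
    rw [core (mul_mem (hyb m) wi_A) hα hh (bd_B m)]; simp only [mul_assoc]
  simp only [h3]
  rw [← Finset.mul_sum, ← map_sum, ← Finset.sum_mul, ← Finset.sum_mul, ← Finset.mul_sum, K2]

/-- The convolution `id * S` is the target counital map: `h₍₁₎ S(h₍₂₎) = λ⁻¹ E_{M₁}(h e₂)`. -/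
theorem anti1_lhs {h : R} (hh : h ∈ D.cB) :
    ∑ j, D.bt j * D.S (D.ga j h) = D.lam⁻¹ • D.EM1 (h * D.e2) := by
  have hl := D.lam_ne
  have hv : D.EM1 (h * D.e2) ∈ D.cV := EM1_V (mul_mem hh e2_B)
  rw [← sub_eq_zero]
  refine sepB_r (D := D) (sub_mem (sum_mem fun j _ => mul_mem (bt_B j) (S_B (ga_B j hh)))
    (Subalgebra.smul_mem _ (V_B hv) _)) ?_
  intro α hα
  have h1 : ∀ j, D.T (D.bt j * D.S (D.ga j h) * (D.e1 * D.e2 * α)) = D.lam⁻¹ *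
      D.T (D.ga j h * (D.winv * D.EM1 (D.e2 * α * D.bt j) * (D.e2 * D.e1 * D.w))) := by
    intro j
    have hE : D.EM1 (D.e2 * α * D.bt j) ∈ D.cA :=
      EM1_A (mul_mem (mul_mem e2_C (A_C hα)) (B_C (bt_B j)))
    have h2 := T_S hE (ga_B j hh)
    have h3 : D.e1 * D.e2 * D.EM1 (D.e2 * α * D.bt j) = D.lam • (D.e1 * D.e2 * α * D.bt j) := by
      have := PP2' (D := D) (α * D.bt j)
      rw [mul_assoc D.e2 α, mul_assoc D.e1, this]; simp only [mul_smul_comm, mul_assoc]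
    rw [h3, mul_smul_comm, map_smul, smul_eq_mul] at h2
    rw [mul_assoc (D.bt j), D.hT_tr (D.bt j)]
    simp only [mul_assoc] at h2 ⊢
    rw [← h2]; field_simp
  rw [sub_mul, map_sub, Finset.sum_mul, map_sum]
  simp only [h1]
  rw [← Finset.mul_sum, core_X hα hh (mul_mem (mul_mem e2_C e1_C) (A_C w_A))]
  have h4 : h * (D.e2 * D.e1 * D.w) * D.winv * α
      = D.lam⁻¹ • (D.EM1 (h * D.e2) * D.e2 * D.e1 * α) := by
    have := w_wi (D := D)
    rw [PP2]
    simp only [smul_mul_assoc, smul_smul]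
    rw [inv_mul_cancel₀ hl, one_smul]
    calc _ = h * D.e2 * D.e1 * (D.w * D.winv) * α := by simp only [mul_assoc]
      _ = _ := by rw [this, mul_one]
  have h5 : D.T (D.EM1 (h * D.e2) * D.e2 * D.e1 * α) = D.lam * D.T (D.e1 * α * D.EM1 (h * D.e2)) := by
    rw [← T_e2 (mul_mem (mul_mem D.he1_mem (A_M1 hα)) hv.1), mul_assoc, D.hT_tr]
    rw [mul_assoc _ (D.EM1 _)]
  have h6 : D.T (D.EM1 (h * D.e2) * (D.e1 * D.e2 * α)) = D.lam * D.T (D.e1 * α * D.EM1 (h * D.e2)) := by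
    have h7 : D.EM1 (h * D.e2) * (D.e1 * D.e2 * α)
        = (D.EM1 (h * D.e2) * D.e1) * (D.e2 * α) := by simp only [mul_assoc]
    rw [h7, D.hT_tr, mul_assoc D.e2, D.hT_tr D.e2, T_e2 (mul_mem (A_M1 hα)
      (mul_mem hv.1 D.he1_mem)), ← mul_assoc, D.hT_tr _ D.e1, ← mul_assoc]
  rw [h4, smul_mul_assoc, map_smul, map_smul, smul_eq_mul, smul_eq_mul, h5, h6]
  field_simp; ring

/-- The convolution `S * id` is the source counital map: `S(h₍₁₎) h₍₂₎ = 1₍₁₎ ε(h 1₍₂₎)`. -/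
theorem anti2 {h : R} (hh : h ∈ D.cB) :
    ∑ j, D.S (D.bt j) * D.ga j h = ∑ j, epsL D (h * D.ga j 1) • D.bt j := by
  have hl := D.lam_ne
  rw [← sub_eq_zero]
  refine sepB_l (D := D) (sub_mem (sum_mem fun j _ => mul_mem (S_B (bt_B j)) (ga_B j hh))
    (sum_mem fun j _ => Subalgebra.smul_mem _ (bt_B j) _)) ?_
  intro a ha
  have hE : ∀ m, D.EM1 (D.bd m * a * D.e2) ∈ D.cA := fun m =>
    EM1_A (mul_mem (mul_mem (B_C (bd_B m)) (A_C ha)) e2_C)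
  have h1 : ∀ j m, D.T (D.S (D.bt j) * D.bd m * (a * D.e2 * D.e1)) = D.lam⁻¹ *
      D.T (D.bt j * (D.winv * D.e1) * D.e2 * (D.EM1 (D.bd m * a * D.e2) * D.w)) := by
    intro j m
    have h2 := S_swap (hE m) e1_A (bt_B j)
    rw [PP2, smul_mul_assoc, mul_smul_comm, map_smul, smul_eq_mul] at h2
    have h3 : D.S (D.bt j) * D.bd m * (a * D.e2 * D.e1)
        = D.S (D.bt j) * (D.bd m * a * D.e2 * D.e1) := by simp only [mul_assoc]
    have h4 : D.T (D.bt j * (D.winv * D.e1) * D.e2 * (D.EM1 (D.bd m * a * D.e2) * D.w))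
        = D.T (D.w * D.bt j * D.winv * D.e1 * D.e2 * D.EM1 (D.bd m * a * D.e2)) := by
      rw [← mul_assoc, D.hT_tr _ D.w]; simp only [mul_assoc]
    rw [h3, h4, ← h2]; field_simp
  have h2 : ∀ j, D.T (D.S (D.bt j) * D.ga j h * (a * D.e2 * D.e1)) = ∑ m, D.lam⁻¹ *
      (D.T (D.bt j * (D.winv * D.e1) * D.e2 * (D.EM1 (D.bd m * a * D.e2) * D.w)) *
        D.T (D.ga j h * D.bt m)) := by
    intro j
    conv_lhs => rw [← dualB1 (ga_B j hh)]
    simp only [Finset.mul_sum, Finset.sum_mul, map_sum, mul_smul_comm, smul_mul_assoc, map_smul,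
      smul_eq_mul, h1]
    exact Finset.sum_congr rfl fun m _ => by ring
  have h3 : ∀ m, ∑ j, D.T (D.bt j * (D.winv * D.e1) * D.e2 * (D.EM1 (D.bd m * a * D.e2) * D.w)) *
        D.T (D.ga j h * D.bt m)
      = D.lam * D.T (h * (D.winv * D.e1) * (D.bt m * D.winv * D.EM1 (D.bd m * (a * D.e2))) * D.w) := by
    intro m
    rw [core (mul_mem wi_A e1_A) (mul_mem (hE m) w_A) hh (bt_B m)]; simp only [mul_assoc]
  have h4 : ∀ j, epsL D (h * D.ga j 1) = D.lam⁻¹ * D.T (D.ga j 1 * (D.e2 * D.w * h)) := fun j => by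
    rw [eps_T (mul_mem hh (ga_B j one_B)), mul_assoc, mul_assoc, D.hT_tr h]; simp only [mul_assoc]
  have h5 := core (D := D) ha e1_A one_B (mul_mem (mul_mem e2_B w_B) hh)
  rw [sub_mul, map_sub, Finset.sum_mul, Finset.sum_mul, map_sum, map_sum]
  simp only [h2, h4]
  rw [Finset.sum_comm]
  simp only [← Finset.mul_sum, h3, smul_mul_assoc, map_smul, smul_eq_mul, mul_assoc D.lam⁻¹]
  rw [← map_sum, ← Finset.sum_mul, ← Finset.mul_sum, K1]
  have h6 : ∑ j, D.T (D.ga j 1 * (D.e2 * D.w * h)) * D.T (D.bt j * (a * D.e2 * D.e1))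
     = D.lam * D.T (1 * a * (D.e2 * D.w * h) * D.winv * D.e1) := by
    rw [← h5]; exact Finset.sum_congr rfl fun j _ => by rw [mul_comm]; simp only [mul_assoc]
  have h7 : D.T (1 * a * (D.e2 * D.w * h) * D.winv * D.e1)
      = D.T (h * (D.winv * D.e1) * (a * D.e2) * D.w) := by
    rw [one_mul, D.hT_tr _ D.w]
    calc _ = D.T ((a * D.e2) * (D.w * h * D.winv * D.e1)) := by simp only [mul_assoc]
      _ = _ := by rw [D.hT_tr]; simp only [mul_assoc]
  rw [h6, h7, sub_self]

/-- The identity `S(h₍₁₎) εₜ(h₍₂₎) = S(h)`, where `εₜ(h) = λ⁻¹ E_{M₁}(h e₂)` is the target counital map.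
Expanding `εₜ(h₍₂₎)` in the dual bases of `V`, each `f⁽¹⁾ e₁` equals `u e₁` with `u ∈ U`, so that it
commutes past `B`; the sum collapses by `∑ f⁽²⁾ f⁽¹⁾ = 1`. -/
theorem anti3' {h : R} (hh : h ∈ D.cB) :
    ∑ j, D.S (D.bt j) * (D.lam⁻¹ • D.EM1 (D.ga j h * D.e2)) = D.S h := by
  have hl := D.lam_ne
  have hv : ∀ j, D.EM1 (D.ga j h * D.e2) ∈ D.cV := fun j => EM1_V (mul_mem (ga_B j hh) e2_B)
  rw [← sub_eq_zero]
  refine sepB_r (D := D) (sub_mem (sum_mem fun j _ => mul_mem (S_B (bt_B j))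
    (Subalgebra.smul_mem _ (V_B (hv j)) _)) (S_B hh)) ?_
  intro a ha
  set u : Fin D.nV → R := fun f => D.lam⁻¹ • D.EM (D.f1 f * D.e1) with hu
  have hfe : ∀ f, D.f1 f * D.e1 = u f * D.e1 := fun f => by
    rw [hu]; simp only [smul_mul_assoc]; exact D.hPP1 _ (f1_V f).1
  have huU : ∀ f, u f ∈ D.cU := fun f =>
    Subalgebra.smul_mem _ (EM_U (mul_mem (V_A (f1_V f)) e1_A)) _
  have h1 : ∀ j f, D.T (D.S (D.bt j) * D.f1 f * (D.e1 * D.e2 * a))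
      = D.T (D.bt j * (D.winv * (a * u f)) * D.e2 * (D.e1 * D.w)) := by
    intro j f
    calc _ = D.T (D.S (D.bt j) * (D.f1 f * D.e1) * (D.e2 * a)) := by simp only [mul_assoc]
      _ = D.T ((D.S (D.bt j) * u f) * D.e1 * (D.e2 * a)) := by rw [hfe]; simp only [mul_assoc]
      _ = D.T (D.S (D.bt j) * (D.e1 * D.e2 * (a * u f))) := by
          rw [commB (S_B (bt_B j)) (huU f).1, mul_assoc, mul_assoc, D.hT_tr (u f)]
          simp only [mul_assoc]
      _ = _ := by
          rw [T_S (mul_mem ha (U_A (huU f))) (bt_B j)]; simp only [mul_assoc]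
  have h2 : ∀ j, D.T (D.S (D.bt j) * (D.lam⁻¹ • D.EM1 (D.ga j h * D.e2)) * (D.e1 * D.e2 * a))
      = ∑ f, D.lam⁻¹ * (D.T (D.bt j * (D.winv * (a * u f)) * D.e2 * (D.e1 * D.w)) *
        D.T (D.ga j h * (D.e2 * D.w * D.f2 f))) := by
    intro j
    conv_lhs => rw [← dualV (hv j)]
    simp only [Finset.mul_sum, Finset.sum_mul, Finset.smul_sum, map_sum, mul_smul_comm,
      smul_mul_assoc, map_smul, smul_eq_mul, h1]
    refine Finset.sum_congr rfl fun f _ => ?_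
    rw [T_EM1_l (mul_mem w_V.1 (f2_V f).1)]
    simp only [mul_assoc]; ring
  have h3 : ∀ f, ∑ j, D.T (D.bt j * (D.winv * (a * u f)) * D.e2 * (D.e1 * D.w)) *
        D.T (D.ga j h * (D.e2 * D.w * D.f2 f))
      = D.lam * D.T (h * D.winv * a * D.e2 * (D.f2 f * D.f1 f) * (D.e1 * D.w)) := by
    intro f
    rw [core (mul_mem wi_A (mul_mem ha (U_A (huU f)))) (mul_mem e1_A w_A) hh
      (mul_mem (mul_mem e2_B w_B) (V_B (f2_V f)))]
    congr 2
    have e1 : u f * D.e2 = D.e2 * u f := (D.he2_M _ (huU f).1).symm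
    have e2 : u f * D.f2 f = D.f2 f * u f := (commB (V_B (f2_V f)) (huU f).1).symm
    have e3 : D.w * D.f2 f * D.winv = D.f2 f := by
      rw [w_central (f2_V f), mul_assoc, w_wi, mul_one]
    calc _ = h * D.winv * a * (u f * D.e2) * (D.w * D.f2 f * D.winv) * D.e1 * D.w := by
          simp only [mul_assoc]
      _ = h * D.winv * a * D.e2 * (u f * D.f2 f) * D.e1 * D.w := by
          rw [e1, e3]; simp only [mul_assoc]
      _ = h * D.winv * a * D.e2 * D.f2 f * (u f * D.e1) * D.w := by
          rw [e2]; simp only [mul_assoc]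
      _ = _ := by rw [← hfe]; simp only [mul_assoc]
  rw [sub_mul, map_sub, Finset.sum_mul, map_sum]
  simp only [h2]
  rw [Finset.sum_comm]
  simp only [← Finset.mul_sum, h3]
  rw [← map_sum, ← Finset.sum_mul, ← Finset.mul_sum, f21, T_S ha hh, mul_one]
  simp only [mul_assoc]
  field_simp; ring

end D2H

/-! ### Weak Hopf identities and semisimplicity from explicit data -/

section generic
variable {k : Type*} [Field k] {R : Type*} [Ring R] [Algebra k R]

/-- A bilinear expression does not depend on the representation of a tensor. -/
theorem rep_lift {W : Type*} [AddCommGroup W] [Module k W] {ι ι' : Type*} [Fintype ι] [Fintype ι']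
    (f : R →ₗ[k] R →ₗ[k] W) {x y : ι → R} {x' y' : ι' → R}
    (h : ∑ i, x i ⊗ₜ[k] y i = ∑ i, x' i ⊗ₜ[k] y' i) : ∑ i, f (x i) (y i) = ∑ i, f (x' i) (y' i) := by
  have := congrArg (TensorProduct.lift f) h
  simpa only [map_sum, TensorProduct.lift.tmul] using this

/-- The weak Hopf identities for a coproduct of the form `Δ(h) = ∑ βᵢ ⊗ γᵢ(h)` follow from identities
between finite sums in `H`. The weak unit identities are asked for as a formula for `Δ(γᵢ(1))`, and
the identity for `S(h₍₁₎) h₍₂₎ S(h₍₃₎)` in the bracketing `S(h₍₁₎) (h₍₂₎ S(h₍₃₎))`. -/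
theorem weakHopf_of {H : Subalgebra k R} {Δ : R →ₗ[k] R ⊗[k] R} {ε : R →ₗ[k] k} {S : R →ₗ[k] R}
    {ι : Type*} [Fintype ι] {β : ι → R} {γ : ι → R → R}
    (hβ : ∀ i, β i ∈ H) (hγ : ∀ i, ∀ h ∈ H, γ i h ∈ H)
    (hΔ : ∀ h ∈ H, Δ h = ∑ i, β i ⊗ₜ[k] γ i h)
    (hS : ∀ h ∈ H, S h ∈ H)
    (coas : ∀ i, ∀ h ∈ H, Δ (γ i h) = ∑ j, γ i (β j) ⊗ₜ[k] γ j h)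
    (cl : ∀ h ∈ H, ∑ j, ε (β j) • γ j h = h) (cr : ∀ h ∈ H, ∑ j, ε (γ j h) • β j = h)
    (mult : ∀ h ∈ H, ∀ g ∈ H, Δ (h * g) = Δ h * Δ g)
    (wc1 : ∀ h ∈ H, ∀ g ∈ H, ∀ f ∈ H, ∑ j, ε (h * β j) * ε (γ j g * f) = ε (h * g * f))
    (wc2 : ∀ h ∈ H, ∀ g ∈ H, ∀ f ∈ H, ∑ j, ε (h * γ j g) * ε (β j * f) = ε (h * g * f))
    (wu1 : ∀ i, Δ (γ i 1) = ∑ j, (γ i 1 * β j) ⊗ₜ[k] γ j 1)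
    (wu2 : ∀ i, Δ (γ i 1) = ∑ j, (β j * γ i 1) ⊗ₜ[k] γ j 1)
    (an1 : ∀ h ∈ H, ∑ j, β j * S (γ j h) = ∑ j, ε (β j * h) • γ j 1)
    (an2 : ∀ h ∈ H, ∑ j, S (β j) * γ j h = ∑ j, ε (h * γ j 1) • β j)
    (an3 : ∀ h ∈ H, ∑ i, S (β i) * ∑ j, β j * S (γ j (γ i h)) = S h) :
    IsWeakHopfOn k R H Δ ε S := by
  have h1 : (1 : R) ∈ H := one_mem _
  have hΔ' : ∀ h ∈ H, TensorProduct.map Δ LinearMap.id (Δ h)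
      = (TensorProduct.assoc k R R R).symm (∑ i, β i ⊗ₜ[k] Δ (γ i h)) := by
    intro h hh
    rw [hΔ h hh]
    simp only [map_sum, TensorProduct.map_tmul, hΔ _ (hβ _), TensorProduct.sum_tmul,
      LinearMap.id_apply, coas _ _ hh, TensorProduct.tmul_sum, TensorProduct.assoc_symm_tmul]
    rw [Finset.sum_comm]
  refine ⟨fun h hh => ?_, hS, fun h hh => ?_, fun h hh m x y hxy => ?_, mult,
    fun h hh g hg f hf m x y hxy => ?_, fun m x y hxy => ?_,
    fun h hh m x y hxy m0 x0 y0 hxy0 => ?_, fun h hh => ?_⟩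
  · rw [hΔ h hh]
    exact sum_mem fun i _ => tmul_sq2 (hβ i) (hγ i h hh)
  · rw [hΔ' h hh]
    conv_rhs => rw [hΔ h hh]
    simp only [map_sum, TensorProduct.map_tmul, LinearMap.id_apply]
  · rw [hΔ h hh] at hxy
    constructor
    · rw [← cl h hh]
      exact (rep_lift (LinearMap.lsmul k R ∘ₗ ε) hxy).symm
    · rw [← cr h hh]
      exact (rep_lift (LinearMap.lsmul k R ∘ₗ ε).flip hxy).symm
  · rw [hΔ g hg] at hxy
    constructor
    · rw [← wc1 h hh g hg f hf]
      exact rep_lift ((LinearMap.mul k k).compl₁₂ (ε ∘ₗ LinearMap.mulLeft k h)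
        (ε ∘ₗ LinearMap.mulRight k f)) hxy
    · rw [← wc2 h hh g hg f hf]
      exact rep_lift ((LinearMap.mul k k).compl₁₂ (ε ∘ₗ LinearMap.mulLeft k h)
        (ε ∘ₗ LinearMap.mulRight k f)).flip hxy
  · rw [three1 hxy, three2 hxy]
    constructor
    · rw [← three1 (hΔ 1 h1), hΔ' 1 h1]
      simp only [wu1, TensorProduct.tmul_sum, map_sum, TensorProduct.assoc_symm_tmul]
    · rw [← three2 (hΔ 1 h1), hΔ' 1 h1]
      simp only [wu2, TensorProduct.tmul_sum, map_sum, TensorProduct.assoc_symm_tmul]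
      rw [Finset.sum_comm]
  · rw [hΔ h hh] at hxy
    rw [hΔ 1 h1] at hxy0
    constructor
    · have e1 := rep_lift ((LinearMap.mul k R).compl₂ S) hxy
      have e2 := rep_lift (LinearMap.lsmul k R ∘ₗ (ε ∘ₗ LinearMap.mulRight k h)) hxy0
      exact e1.symm.trans ((an1 h hh).trans e2)
    · have e1 := rep_lift (LinearMap.mul k R ∘ₗ S) hxy
      have e2 := rep_lift (LinearMap.lsmul k R ∘ₗ (ε ∘ₗ LinearMap.mulLeft k h)).flip hxy0
      exact e1.symm.trans ((an2 h hh).trans e2)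
  · rw [hΔ' h hh, ← an3 h hh]
    simp only [map_sum]
    refine Finset.sum_congr rfl fun i _ => ?_
    rw [hΔ _ (hγ i h hh)]
    simp only [TensorProduct.tmul_sum, map_sum, TensorProduct.assoc_symm_tmul,
      TensorProduct.map_tmul, LinearMap.comp_apply, LinearMap.mul'_apply, LinearMap.id_apply,
      Finset.mul_sum, mul_assoc]

/-- A separable algebra is semisimple: averaging a linear projection onto a left ideal over the
separability element makes it linear over the algebra. -/
theorem semisimple_of {H : Subalgebra k R} {ι : Type*} [Fintype ι] {p q : ι → R}
    (hp : ∀ i, p i ∈ H) (hq : ∀ i, q i ∈ H) (h1 : ∑ i, p i * q i = 1)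
    (hc : ∀ h ∈ H, ∑ i, (h * p i) ⊗ₜ[k] q i = ∑ i, p i ⊗ₜ[k] (q i * h)) : IsSemisimpleRing H := by
  refine (isSemisimpleModule_iff H H).2 ⟨fun N => ?_⟩
  obtain ⟨g, hg⟩ := LinearMap.exists_leftInverse_of_injective
    (H.val.toLinearMap ∘ₗ (N.restrictScalars k).subtype)
    (LinearMap.ker_eq_bot.2 (Subtype.val_injective.comp Subtype.val_injective))
  have hg' : ∀ (n : H) (hn : n ∈ N), g (n : R) = ⟨n, hn⟩ := fun n hn =>
    LinearMap.congr_fun hg (⟨n, hn⟩ : N.restrictScalars k)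
  let π : H →ₗ[H] N :=
    { toFun := fun x => ∑ i, (⟨p i, hp i⟩ : H) • (show N from g (q i * (x : R)))
      map_add' := fun x y => by
        rw [← Finset.sum_add_distrib]
        refine Finset.sum_congr rfl fun i _ => ?_
        rw [← smul_add]; congr 1
        simp only [Subalgebra.coe_add, mul_add, map_add]; rfl
      map_smul' := fun h x => by
        apply Subtype.ext; apply Subtype.ext
        have := rep_lift ((LinearMap.mul k R).compl₂
          (H.val.toLinearMap ∘ₗ (N.restrictScalars k).subtype ∘ₗ g ∘ₗ LinearMap.mulRight k (x : R)))
          (hc h h.2)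
        simp only [LinearMap.compl₂_apply, LinearMap.mul_apply', LinearMap.comp_apply,
          LinearMap.mulRight_apply] at this
        simp only [RingHom.id_apply, Finset.smul_sum,
          AddSubmonoidClass.coe_finsetSum, Submodule.coe_smul, smul_eq_mul, Subalgebra.coe_mul]
        simp only [mul_assoc] at this ⊢
        exact this.symm }
  refine ⟨LinearMap.ker π, LinearMap.isCompl_of_proj fun n => ?_⟩
  apply Subtype.ext; apply Subtype.ext
  have h2 : ∀ i, g (q i * ((n : H) : R)) = (⟨(⟨q i, hq i⟩ : H) • (n : H), N.smul_mem _ n.2⟩ : N) :=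
    fun i => hg' ((⟨q i, hq i⟩ : H) • (n : H)) (N.smul_mem _ n.2)
  change ((((∑ i, (⟨p i, hp i⟩ : H) • (show N from g (q i * ((n : H) : R)))) : N) : H) : R) = _
  simp only [h2]
  simp only [AddSubmonoidClass.coe_finsetSum, Submodule.coe_smul, smul_eq_mul,
    Subalgebra.coe_mul, ← mul_assoc]
  rw [← Finset.sum_mul, h1, one_mul]
end generic

namespace D2H
variable {k : Type*} [Field k] {R : Type*} [Ring R] [Algebra k R] {D : D2H k R}

/-- The identity `S(h₍₁₎) h₍₂₎ S(h₍₃₎) = S(h)`. -/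
theorem anti3s {h : R} (hh : h ∈ D.cB) :
    ∑ i, D.S (D.bt i) * ∑ j, D.bt j * D.S (D.ga j (D.ga i h)) = D.S h := by
  simp only [anti1_lhs (ga_B _ hh), anti3' hh]

variable (D) in
theorem weakHopf_B : IsWeakHopfOn k R D.cB D.Δ (epsL D) D.S :=
  weakHopf_of (β := D.bt) (γ := fun i => D.ga i) bt_B (fun i _ hh => ga_B i hh) (fun _ hh => Δ_eq hh)
    (fun _ hh => S_B hh) (fun i _ hh => Δ_ga i hh) (fun _ hh => counit_l hh)
    (fun _ hh => counit_r hh) (fun _ hh _ hg => Δ_mul hh hg)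
    (fun _ hh _ hg _ hf => wk_counit1 hh hg hf) (fun _ hh _ hg _ hf => wk_counit2 hh hg hf)
    (fun i => Δ_V_l (ga_V i one_V)) (fun i => Δ_V_r (ga_V i one_V))
    (fun _ hh => (anti1_lhs hh).trans (anti1_rhs hh).symm) (fun _ hh => anti2 hh)
    (fun _ hh => anti3s hh)

/-! ### Semisimplicity of `A` and `B` -/

/-- The dual bases of `E_{M₁}` have index `λ⁻¹`. Writing `1 = ∑ xᵢ e₁ yᵢ` and `λ e₁ = e₁ e₂ e₁` turns
`∑ u_l v_l` into `∑ u_l E_{M₁}(v_l ·)`, to which the dual bases property applies. -/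
theorem sum_uv : ∑ l, D.ub l * D.vb l = D.lam⁻¹ • (1 : R) := by
  have hl := D.lam_ne
  have h1 : ∀ l, D.vb l = D.lam⁻¹ ^ 2 • ∑ i, D.EM1 (D.vb l * (D.xb i * D.e1 * D.e2)) * (D.e2 * D.e1 * D.yb i) := by
    intro l
    have h2 : ∀ i, D.EM1 (D.vb l * (D.xb i * D.e1 * D.e2)) * (D.e2 * D.e1 * D.yb i)
        = D.lam ^ 2 • (D.vb l * (D.xb i * D.e1 * D.yb i)) := by
      intro i
      calc _ = D.EM1 (D.vb l * (D.xb i * D.e1) * D.e2) * D.e2 * (D.e1 * D.yb i) := by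
            simp only [mul_assoc]
        _ = D.lam • (D.vb l * D.xb i * (D.e1 * D.e2 * D.e1) * D.yb i) := by
            rw [PP2]; simp only [smul_mul_assoc, mul_assoc]
        _ = _ := by
            rw [D.hbraid1]
            simp only [smul_mul_assoc, mul_smul_comm, smul_smul, mul_assoc, pow_two]
    simp only [h2]
    rw [← Finset.smul_sum, ← Finset.mul_sum, sum_xey, mul_one, smul_smul]
    field_simp; simp
  have h3 : ∀ i, D.xb i * D.e1 * D.e2 * (D.e2 * D.e1 * D.yb i)
      = D.lam • (D.xb i * D.e1 * D.yb i) := by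
    intro i
    calc _ = D.xb i * (D.e1 * (D.e2 * D.e2) * D.e1) * D.yb i := by simp only [mul_assoc]
      _ = _ := by
        rw [D.he2_idem, D.hbraid1]; simp only [smul_mul_assoc, mul_smul_comm]
  calc _ = D.lam⁻¹ ^ 2 • ∑ i, (∑ l, D.ub l * D.EM1 (D.vb l * (D.xb i * D.e1 * D.e2))) *
        (D.e2 * D.e1 * D.yb i) := by
        conv_lhs => enter [2, l]; rw [h1 l]
        simp only [mul_smul_comm, Finset.mul_sum, Finset.sum_mul, ← Finset.smul_sum, mul_assoc]
        rw [Finset.sum_comm]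
    _ = _ := by
        simp only [D.hdualB2, h3]
        rw [← Finset.smul_sum, sum_xey, smul_smul]
        congr 1; field_simp

/-- The dual bases of `E_M` in `A` have index `λ⁻¹`. -/
theorem sum_zw : ∑ j, D.zb j * D.wb j = D.lam⁻¹ • (1 : R) := by
  have hl := D.lam_ne
  have hw : ∀ j i, D.wb j * D.xb i ∈ D.M1 := fun j i => mul_mem (D.hwb j).1 (D.hMM1 (D.hxb i))
  have h1 : ∀ j, D.wb j = D.lam⁻¹ • ∑ i, D.EM (D.wb j * (D.xb i * D.e1)) * (D.e1 * D.yb i) := by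
    intro j
    have h2 : ∀ i, D.EM (D.wb j * (D.xb i * D.e1)) * (D.e1 * D.yb i)
        = D.lam • (D.wb j * (D.xb i * D.e1 * D.yb i)) := by
      intro i
      have := D.hPP1 _ (hw j i)
      have h3 : D.EM (D.wb j * D.xb i * D.e1) * D.e1 = D.lam • (D.wb j * D.xb i * D.e1) := by
        conv_rhs => rw [this, smul_smul, mul_inv_cancel₀ hl, one_smul]
      rw [← mul_assoc, ← mul_assoc, h3]; simp only [smul_mul_assoc, mul_assoc]
    simp only [h2]
    rw [← Finset.smul_sum, ← Finset.mul_sum, sum_xey, mul_one, smul_smul, inv_mul_cancel₀ hl,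
      one_smul]
  have h3 : ∀ i, D.xb i * D.e1 * (D.e1 * D.yb i) = D.xb i * D.e1 * D.yb i := by
    intro i
    rw [← mul_assoc, mul_assoc _ D.e1 D.e1, D.he1_idem]
  calc _ = D.lam⁻¹ • ∑ i, (∑ j, D.zb j * D.EM (D.wb j * (D.xb i * D.e1))) * (D.e1 * D.yb i) := by
        conv_lhs => enter [2, l]; rw [h1 l]
        simp only [mul_smul_comm, Finset.mul_sum, Finset.sum_mul, ← Finset.smul_sum, mul_assoc]
        rw [Finset.sum_comm]
    _ = _ := by
        have : ∀ i, ∑ j, D.zb j * D.EM (D.wb j * (D.xb i * D.e1)) = D.xb i * D.e1 := fun i =>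
          D.hdualA2 _ (mul_mem (D.hMM1 (D.hxb i)) D.he1_mem)
        simp only [this, h3, sum_xey]

end D2H

section cas
variable {k : Type*} [Field k] {R : Type*} [Ring R] [Algebra k R]
/-- Transitivity of separability: if `s ⊗ t` is a separability element of `K` and `K ≤ H` has a
conditional expectation `F` with dual bases `u, v` such that `∑ uᵢ vᵢ = l⁻¹`, then `l u s ⊗ t v` is
a separability element of `H`, which is therefore semisimple. -/
theorem semisimple_tower {H K : Subalgebra k R} (hKH : K ≤ H) {n m : ℕ} {u v : Fin n → R}
    {s t : Fin m → R} {F : R →ₗ[k] R} {l : k} (hl : l ≠ 0)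
    (hu : ∀ i, u i ∈ H) (hv : ∀ i, v i ∈ H) (hs : ∀ i, s i ∈ K) (ht : ∀ i, t i ∈ K)
    (hF : ∀ h ∈ H, F h ∈ K) (hd1 : ∀ h ∈ H, ∑ i, F (h * u i) * v i = h)
    (hd2 : ∀ h ∈ H, ∑ i, u i * F (v i * h) = h) (huv : ∑ i, u i * v i = l⁻¹ • (1 : R))
    (hst : ∑ i, s i * t i = 1)
    (hc : ∀ x ∈ K, ∑ i, (x * s i) ⊗ₜ[k] t i = ∑ i, s i ⊗ₜ[k] (t i * x)) : IsSemisimpleRing H := by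
  refine semisimple_of (H := H) (p := fun i : Fin n × Fin m => l • (u i.1 * s i.2))
    (q := fun i => t i.2 * v i.1) (fun i => Subalgebra.smul_mem _ (mul_mem (hu _) (hKH (hs _))) _)
    (fun i => mul_mem (hKH (ht _)) (hv _)) ?_ fun h hh => ?_
  · rw [Fintype.sum_prod_type]
    have : ∀ i, ∑ j, l • (u i * s j) * (t j * v i) = l • (u i * v i) := fun i => by
      calc _ = l • (u i * (∑ j, s j * t j) * v i) := by
            simp only [Finset.mul_sum, Finset.sum_mul, Finset.smul_sum, smul_mul_assoc, mul_assoc]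
        _ = _ := by rw [hst, mul_one]
    simp only [this]
    rw [← Finset.smul_sum, huv, smul_smul, mul_inv_cancel₀ hl, one_smul]
  · have hK : ∀ i j, F (v j * h * u i) ∈ K := fun i j => hF _ (mul_mem (mul_mem (hv j) hh) (hu i))
    -- the Casimir property of `s ⊗ t` on the middle leg
    have h1 : ∀ i j, ∑ a, (u j * F (v j * h * u i) * s a) ⊗ₜ[k] (t a * v i)
        = ∑ a, (u j * s a) ⊗ₜ[k] (t a * (F (v j * h * u i) * v i)) := by
      intro i j
      have := congrArg (TensorProduct.map (LinearMap.mulLeft k (u j)) (LinearMap.mulRight k (v i)))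
        (hc _ (hK i j))
      simpa only [map_sum, TensorProduct.map_tmul, LinearMap.mulLeft_apply,
        LinearMap.mulRight_apply, mul_assoc] using this
    have h2 : ∀ i, h * u i = ∑ j, u j * F (v j * h * u i) := fun i => by
      conv_lhs => rw [← hd2 _ (mul_mem hh (hu i))]
      simp only [mul_assoc]
    have h3 : ∀ j, v j * h = ∑ i, F (v j * h * u i) * v i := fun j =>
      (hd1 _ (mul_mem (hv j) hh)).symm
    simp only [mul_smul_comm, ← TensorProduct.smul_tmul', ← Finset.smul_sum]
    congr 1
    rw [Fintype.sum_prod_type, Fintype.sum_prod_type]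
    calc _ = ∑ i, ∑ j, ∑ a, (u j * F (v j * h * u i) * s a) ⊗ₜ[k] (t a * v i) := by
          refine Finset.sum_congr rfl fun i _ => ?_
          have h4 : ∀ a, h * (u i * s a) = ∑ j, u j * F (v j * h * u i) * s a := fun a => by
            rw [← mul_assoc]
            exact (congrArg (· * s a) (h2 i)).trans (Finset.sum_mul ..)
          simp only [h4, TensorProduct.sum_tmul]
          rw [Finset.sum_comm]
      _ = ∑ j, ∑ i, ∑ a, (u j * s a) ⊗ₜ[k] (t a * (F (v j * h * u i) * v i)) := by
          simp only [h1]; rw [Finset.sum_comm]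
      _ = _ := by
          refine Finset.sum_congr rfl fun j _ => ?_
          rw [Finset.sum_comm]
          refine Finset.sum_congr rfl fun a _ => ?_
          have h4 : t a * v j * h = ∑ i, t a * (F (v j * h * u i) * v i) := by
            rw [mul_assoc]
            exact (congrArg (t a * ·) (h3 j)).trans (Finset.mul_sum ..)
          rw [h4, TensorProduct.tmul_sum]
end cas

namespace D2H
variable {k : Type*} [Field k] {R : Type*} [Ring R] [Algebra k R] (D : D2H k R)

theorem semisimple_B : IsSemisimpleRing D.cB :=
  semisimple_tower (K := D.cV) (fun _ h => V_B h) D.lam_ne u_B v_B f1_V f2_V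
    (fun _ h => EM1_V h) (fun h _ => D.hdualB1 h) (fun h _ => D.hdualB2 h) sum_uv D.hf_one
    fun _ hx => D.hf_cas _ (mem_cV.1 hx).1 (mem_cV.1 hx).2

theorem semisimple_A : IsSemisimpleRing D.cA :=
  semisimple_tower (K := D.cU) (fun _ h => U_A h) D.lam_ne (fun i => mem_cA.2 (D.hzb i))
    (fun i => mem_cA.2 (D.hwb i)) (fun i => mem_cU.2 (D.hsp i)) (fun i => mem_cU.2 (D.hsq i))
    (fun _ h => EM_U h) (fun h hh => D.hdualA1 h (A_M1 hh)) (fun h hh => D.hdualA2 h (A_M1 hh))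
    sum_zw D.hsep_one fun _ hx => D.hsep_cas _ (mem_cU.1 hx).1 (mem_cU.1 hx).2

end D2H

/-! ### The dual weak Hopf algebra `A` -/

namespace D2H
variable {k : Type*} [Field k] {R : Type*} [Ring R] [Algebra k R] {D : D2H k R}

variable (D) in
/-- The second legs of the coproduct of `A`: `δ_i` is the transpose of left multiplication by `β_i`. -/
noncomputable def de (i : D.ix) : R →ₗ[k] R :=
  ∑ j, (D.P.flip (D.bt i * D.bt j)).smulRight (D.al j)
variable (D) in
/-- The coproduct `Δ_A(a) = ∑ α_i ⊗ δ_i(a)` of `A`, dual to the product of `B`. -/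
noncomputable def ΔA : R →ₗ[k] R ⊗[k] R := ∑ i, (TensorProduct.mk k R R (D.al i)) ∘ₗ D.de i
variable (D) in
/-- The antipode of `A`, the transpose of `S`. -/
noncomputable def SA : R →ₗ[k] R := ∑ j, (D.P.flip (D.S (D.bt j))).smulRight (D.al j)

theorem de_apply (i : D.ix) (a : R) : D.de i a = ∑ j, D.P a (D.bt i * D.bt j) • D.al j := by
  simp [de]
theorem ΔA_apply (a : R) : D.ΔA a = ∑ i, D.al i ⊗ₜ[k] D.de i a := by simp [ΔA]
theorem SA_apply (a : R) : D.SA a = ∑ j, D.P a (D.S (D.bt j)) • D.al j := by simp [SA]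

theorem de_A (i : D.ix) (a : R) : D.de i a ∈ D.cA := by
  rw [de_apply]; exact sum_mem fun j _ => Subalgebra.smul_mem _ (al_A j) _
theorem SA_A (a : R) : D.SA a ∈ D.cA := by
  rw [SA_apply]; exact sum_mem fun j _ => Subalgebra.smul_mem _ (al_A j) _

/-- Every linear functional on `B` is represented by an element of `A`. -/
theorem dual_exp (φ : R →ₗ[k] k) {b : R} (hb : b ∈ D.cB) :
    D.P (∑ j, φ (D.bt j) • D.al j) b = φ b := by
  conv_rhs => rw [← P_al_bt hb]
  simp only [map_sum, map_smul, LinearMap.sum_apply, LinearMap.smul_apply, smul_eq_mul]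
  exact Finset.sum_congr rfl fun j _ => mul_comm _ _

theorem P_de (i : D.ix) (a : R) {b : R} (hb : b ∈ D.cB) : D.P (D.de i a) b = D.P a (D.bt i * b) := by
  rw [de_apply]
  exact dual_exp (D.P a ∘ₗ LinearMap.mulLeft k (D.bt i)) hb

theorem P_SA (a : R) {b : R} (hb : b ∈ D.cB) : D.P (D.SA a) b = D.P a (D.S b) := by
  rw [SA_apply]
  exact dual_exp (D.P a ∘ₗ D.S) hb

/-- The coproduct of `A` is dual to the product of `B`. -/
theorem P_com (a : R) {b b' : R} (hb : b ∈ D.cB) (hb' : b' ∈ D.cB) :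
    ∑ i, D.P (D.al i) b * D.P (D.de i a) b' = D.P a (b * b') := by
  simp only [P_de _ _ hb']
  conv_rhs => rw [← P_al_bt hb]
  simp only [Finset.sum_mul, map_sum, smul_mul_assoc, map_smul, smul_eq_mul]

theorem sepPA {a a' : R} (ha : a ∈ D.cA) (ha' : a' ∈ D.cA) (h : ∀ b ∈ D.cB, D.P a b = D.P a' b) :
    a = a' := by
  rw [← P_bt_al ha, ← P_bt_al ha']
  simp only [h _ (bt_B _)]

/-- Elements of `A ⊗ A` are separated by pairs of elements of `B`. -/
theorem extA {X Y : R ⊗[k] R} (hX : X ∈ sq2 D.cA) (hY : Y ∈ sq2 D.cA)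
    (h : ∀ b ∈ D.cB, ∀ b' ∈ D.cB, ev (D.P.flip b) (D.P.flip b') X = ev (D.P.flip b) (D.P.flip b') Y) :
    X = Y :=
  ext_sq2 (α := fun i => D.P.flip (D.bt i)) (β := D.al) (fun _ ha => P_bt_al ha) hX hY
    fun i j => h _ (bt_B i) _ (bt_B j)

theorem ΔA_sq2 (a : R) : D.ΔA a ∈ sq2 D.cA := by
  rw [ΔA_apply]; exact sum_mem fun i _ => tmul_sq2 (al_A i) (de_A i a)

theorem ev_ΔA (a : R) {b b' : R} (hb : b ∈ D.cB) (hb' : b' ∈ D.cB) :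
    ev (D.P.flip b) (D.P.flip b') (D.ΔA a) = D.P a (b * b') := by
  rw [ΔA_apply, map_sum]; exact P_com a hb hb'

theorem epsA (a : R) : epsAL D a = D.P a 1 := by
  simp [epsAL, P_apply, mul_assoc]

/-- Paired with `b ⊗ b'`, this is the multiplicativity of the coproduct of `B` paired with `a ⊗ a'`. -/
theorem ΔA_mul {a a' : R} (ha : a ∈ D.cA) (ha' : a' ∈ D.cA) :
    D.ΔA (a * a') = D.ΔA a * D.ΔA a' := by
  apply extA (ΔA_sq2 _) (mul_sq2 (ΔA_sq2 _) (ΔA_sq2 _))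
  intro b hb b' hb'
  rw [ev_ΔA _ hb hb', ← ev_Δ ha ha' (mul_mem hb hb'), Δ_mul hb hb', Δ_eq hb, Δ_eq hb', ΔA_apply,
    ΔA_apply, Finset.sum_mul_sum, Finset.sum_mul_sum]
  simp only [Algebra.TensorProduct.tmul_mul_tmul, map_sum, ev_tmul, LinearMap.flip_apply]
  simp only [← P_mul (al_A _) (al_A _) hb, ← P_mul (de_A _ _) (de_A _ _) hb',
    ← P_com _ (bt_B _) (bt_B _), ← P_com _ (ga_B _ hb) (ga_B _ hb')]
  simp only [Finset.sum_mul_sum]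
  simp only [← Finset.sum_product', Finset.univ_product_univ]
  refine Fintype.sum_equiv (⟨fun x => (x.2.2.1, x.2.2.2, x.1, x.2.1),
    fun x => (x.2.2.1, x.2.2.2, x.1, x.2.1), fun _ => rfl, fun _ => rfl⟩ :
    D.ix × D.ix × D.ix × D.ix ≃ D.ix × D.ix × D.ix × D.ix) _ _ fun x => ?_
  simp only [Equiv.coe_fn_mk]
  ring

end D2H

namespace D2H
variable {k : Type*} [Field k] {R : Type*} [Ring R] [Algebra k R] {D : D2H k R}

theorem coasA (i : D.ix) (a : R) :
    D.ΔA (D.de i a) = ∑ j, D.de i (D.al j) ⊗ₜ[k] D.de j a := by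
  apply extA (ΔA_sq2 _) (sum_mem fun j _ => tmul_sq2 (de_A i _) (de_A j a))
  intro b hb b' hb'
  rw [ev_ΔA _ hb hb', P_de i a (mul_mem hb hb'), map_sum, ← mul_assoc,
    ← P_com a (mul_mem (bt_B i) hb) hb']
  simp only [ev_tmul, LinearMap.flip_apply, P_de i _ hb]

theorem counitA_l {a : R} (ha : a ∈ D.cA) : ∑ j, epsAL D (D.al j) • D.de j a = a := by
  apply sepPA (sum_mem fun j _ => Subalgebra.smul_mem _ (de_A j a) _) ha
  intro b hb
  simp only [map_sum, map_smul, LinearMap.sum_apply, LinearMap.smul_apply, smul_eq_mul, epsA]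
  rw [P_com a one_B hb, one_mul]

theorem counitA_r {a : R} (ha : a ∈ D.cA) : ∑ j, epsAL D (D.de j a) • D.al j = a := by
  apply sepPA (sum_mem fun j _ => Subalgebra.smul_mem _ (al_A j) _) ha
  intro b hb
  simp only [map_sum, map_smul, LinearMap.sum_apply, LinearMap.smul_apply, smul_eq_mul, epsA]
  simp only [mul_comm (D.P (D.de _ a) 1)]
  rw [P_com a hb one_B, mul_one]

/-- Contraction of the double sum over the legs of the coproducts of `1` and `g`, used to dualize the
weak unit identities. -/
theorem sum_swap {ι ι' : Type*} [Fintype ι] [Fintype ι'] {p q : ι → k} {r : ι → ι → k}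
    {x y : ι' → ι → k} (h : ∀ l m, ∑ j, x j l * y j m = r l m) :
    ∑ j, (∑ l, p l * x j l) * (∑ m, y j m * q m) = ∑ l, p l * ∑ m, r l m * q m := by
  simp only [← h, Finset.sum_mul_sum]
  simp only [Finset.mul_sum, Finset.sum_mul]
  rw [Finset.sum_comm]
  refine Finset.sum_congr rfl fun l _ => ?_
  rw [Finset.sum_comm]
  exact Finset.sum_congr rfl fun m _ => Finset.sum_congr rfl fun j _ => by ring

/-- Dual to `Δ_V_l`, the left weak unit identity of `B`. -/
theorem wk_counitA1 {h g f : R} (hh : h ∈ D.cA) (hg : g ∈ D.cA) (hf : f ∈ D.cA) :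
    ∑ j, epsAL D (h * D.al j) * epsAL D (D.de j g * f) = epsAL D (h * g * f) := by
  simp only [epsA]
  have h1 : ∀ l, ∑ m, D.P g (D.ga l 1 * D.bt m) * D.P f (D.ga m 1) = D.P (g * f) (D.ga l 1) := by
    intro l
    rw [← ev_Δ hg hf (ga_B l one_B), Δ_V_l (ga_V l one_V), map_sum]
    rfl
  rw [mul_assoc, ← P_mul hh (mul_mem hg hf) one_B]
  simp only [← h1, ← P_mul hh (al_A _) one_B, ← P_mul (de_A _ g) hf one_B]
  exact sum_swap fun l m => P_com g (ga_B l one_B) (bt_B m)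

/-- Dual to `Δ_V_r`, the right weak unit identity of `B`. -/
theorem wk_counitA2 {h g f : R} (hh : h ∈ D.cA) (hg : g ∈ D.cA) (hf : f ∈ D.cA) :
    ∑ j, epsAL D (h * D.de j g) * epsAL D (D.al j * f) = epsAL D (h * g * f) := by
  simp only [epsA]
  have h1 : ∀ l, ∑ m, D.P g (D.bt m * D.ga l 1) * D.P f (D.ga m 1) = D.P (g * f) (D.ga l 1) := by
    intro l
    rw [← ev_Δ hg hf (ga_B l one_B), Δ_V_r (ga_V l one_V), map_sum]
    rfl
  rw [mul_assoc, ← P_mul hh (mul_mem hg hf) one_B]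
  simp only [← h1, ← P_mul hh (de_A _ g) one_B, ← P_mul (al_A _) hf one_B]
  refine sum_swap fun l m => ?_
  rw [← P_com g (bt_B m) (ga_B l one_B)]
  exact Finset.sum_congr rfl fun j _ => mul_comm _ _

/-- Dual to the weak counit identity `wk_counit1` of `B`. -/
theorem wk_unitA1 (i : D.ix) :
    D.ΔA (D.de i 1) = ∑ j, (D.de i 1 * D.al j) ⊗ₜ[k] D.de j 1 := by
  apply extA (ΔA_sq2 _) (sum_mem fun j _ => tmul_sq2 (mul_mem (de_A i _) (al_A j)) (de_A j 1))
  intro b hb b' hb'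
  rw [ev_ΔA _ hb hb', P_de i 1 (mul_mem hb hb'), map_sum, P_eps, ← mul_assoc,
    ← wk_counit1 (bt_B i) hb hb']
  simp only [ev_tmul, LinearMap.flip_apply, ← P_mul (de_A i _) (al_A _) hb, Finset.sum_mul,
    mul_assoc]
  rw [Finset.sum_comm]
  simp only [← Finset.mul_sum, P_com _ (ga_B _ hb) hb', P_de i _ (bt_B _), P_eps]

/-- Dual to the weak counit identity `wk_counit2` of `B`. -/
theorem wk_unitA2 (i : D.ix) :
    D.ΔA (D.de i 1) = ∑ j, (D.al j * D.de i 1) ⊗ₜ[k] D.de j 1 := by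
  apply extA (ΔA_sq2 _) (sum_mem fun j _ => tmul_sq2 (mul_mem (al_A j) (de_A i _)) (de_A j 1))
  intro b hb b' hb'
  rw [ev_ΔA _ hb hb', P_de i 1 (mul_mem hb hb'), map_sum, P_eps, ← mul_assoc,
    ← wk_counit2 (bt_B i) hb hb']
  simp only [ev_tmul, LinearMap.flip_apply, ← P_mul (al_A _) (de_A i _) hb, Finset.sum_mul]
  rw [Finset.sum_comm]
  refine Finset.sum_congr rfl fun l _ => ?_
  rw [← P_eps (D.bt l * b'), ← P_com 1 (bt_B l) hb', Finset.mul_sum]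
  refine Finset.sum_congr rfl fun j _ => ?_
  rw [P_de i _ (ga_B l hb), P_eps]
  ring

/-- The convolution `id * S_A` of `A` is the transpose of the convolution `id * S` of `B`. -/
theorem P_convA (a : R) {b : R} (hb : b ∈ D.cB) :
    D.P (∑ j, D.al j * D.SA (D.de j a)) b = D.P a (∑ l, D.bt l * D.S (D.ga l b)) := by
  simp only [map_sum, LinearMap.sum_apply, ← P_mul (al_A _) (SA_A _) hb, P_SA _ (ga_B _ hb)]
  rw [Finset.sum_comm]
  exact Finset.sum_congr rfl fun l _ => P_com a (bt_B l) (S_B (ga_B l hb))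

theorem antiA1 {a : R} (ha : a ∈ D.cA) :
    ∑ j, D.al j * D.SA (D.de j a) = ∑ j, epsAL D (D.al j * a) • D.de j 1 := by
  apply sepPA (sum_mem fun j _ => mul_mem (al_A j) (SA_A _))
    (sum_mem fun j _ => Subalgebra.smul_mem _ (de_A j 1) _)
  intro b hb
  rw [P_convA a hb, anti1_lhs hb, ← anti1_rhs hb]
  simp only [map_sum, map_smul, LinearMap.sum_apply, LinearMap.smul_apply, smul_eq_mul, epsA,
    ← P_mul (al_A _) ha one_B, Finset.sum_mul]
  rw [Finset.sum_comm]
  refine Finset.sum_congr rfl fun l _ => ?_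
  rw [← P_eps, ← P_com 1 (bt_B l) hb, Finset.sum_mul]
  exact Finset.sum_congr rfl fun j _ => by ring

theorem antiA2 {a : R} (ha : a ∈ D.cA) :
    ∑ j, D.SA (D.al j) * D.de j a = ∑ j, epsAL D (a * D.de j 1) • D.al j := by
  apply sepPA (sum_mem fun j _ => mul_mem (SA_A _) (de_A j _))
    (sum_mem fun j _ => Subalgebra.smul_mem _ (al_A j) _)
  intro b hb
  have h1 : D.P (∑ j, D.SA (D.al j) * D.de j a) b = D.P a (∑ l, D.S (D.bt l) * D.ga l b) := by
    simp only [map_sum, LinearMap.sum_apply, ← P_mul (SA_A _) (de_A _ _) hb, P_SA _ (bt_B _)]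
    rw [Finset.sum_comm]
    exact Finset.sum_congr rfl fun l _ => P_com a (S_B (bt_B l)) (ga_B l hb)
  rw [h1, anti2 hb]
  simp only [map_sum, map_smul, LinearMap.sum_apply, LinearMap.smul_apply, smul_eq_mul, epsA,
    ← P_mul ha (de_A _ _) one_B, Finset.sum_mul]
  rw [Finset.sum_comm]
  refine Finset.sum_congr rfl fun l _ => ?_
  rw [← P_eps, ← P_com 1 hb (ga_B l one_B), Finset.sum_mul]
  exact Finset.sum_congr rfl fun j _ => by ring

theorem antiA3 {a : R} :
    ∑ i, D.SA (D.al i) * ∑ j, D.al j * D.SA (D.de j (D.de i a)) = D.SA a := by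
  have hm : ∀ c : R, ∑ j, D.al j * D.SA (D.de j c) ∈ D.cA := fun c =>
    sum_mem fun j _ => mul_mem (al_A j) (SA_A _)
  apply sepPA (sum_mem fun i _ => mul_mem (SA_A _) (hm _)) (SA_A a)
  intro b hb
  rw [P_SA a hb, ← anti3s hb]
  rw [map_sum, LinearMap.sum_apply, map_sum]
  simp only [← P_mul (SA_A _) (hm _) hb, P_SA _ (bt_B _), P_convA _ (ga_B _ hb)]
  rw [Finset.sum_comm]
  exact Finset.sum_congr rfl fun l _ => P_com a (S_B (bt_B l))
    (sum_mem fun j _ => mul_mem (bt_B j) (S_B (ga_B j (ga_B l hb))))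

variable (D) in
theorem weakHopf_A : IsWeakHopfOn k R D.cA D.ΔA (epsAL D) D.SA :=
  weakHopf_of (β := D.al) (γ := fun i => D.de i) al_A (fun i _ _ => de_A i _)
    (fun _ _ => ΔA_apply _) (fun _ _ => SA_A _) (fun i _ _ => coasA i _)
    (fun _ hh => counitA_l hh) (fun _ hh => counitA_r hh) (fun _ hh _ hg => ΔA_mul hh hg)
    (fun _ hh _ hg _ hf => wk_counitA1 hh hg hf) (fun _ hh _ hg _ hf => wk_counitA2 hh hg hf)
    wk_unitA1 wk_unitA2 (fun _ hh => antiA1 hh) (fun _ hh => antiA2 hh) (fun _ _ => antiA3)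
end D2H

/-! ### The weak Hopf algebras `B` and `A` -/

/-- `(B, Δ, ε, S)` is a semisimple weak Hopf algebra over `k`;
consequently `A`, endowed with the comultiplication, counit and antipode dual to
the multiplication, unit and antipode of `B` via the pairing `⟨·,·⟩`, is a
semisimple weak Hopf algebra isomorphic to the dual weak Hopf algebra of `B`
(the pairing induces a linear bijection of `A` onto the dual space of `B`). -/
theorem stmt14 {k : Type*} [Field k] {R : Type*} [Ring R] [Algebra k R] (D : D2H k R) :
    IsWeakHopfOn k R (D2.B D.toD2S.toD2) D.Δ (epsL D) D.S ∧
    IsSemisimpleRing (D2.B D.toD2S.toD2) ∧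
    (∃ (ΔA : R →ₗ[k] R ⊗[k] R) (SA : R →ₗ[k] R),
      -- ΔA is dual to the multiplication of B
      (∀ a ∈ D2.A D.toD2S.toD2,
        ∀ (m : ℕ) (a1 a2 : Fin m → R), ΔA a = ∑ i, a1 i ⊗ₜ[k] a2 i →
        ∀ b ∈ D2.B D.toD2S.toD2, ∀ b' ∈ D2.B D.toD2S.toD2,
          ∑ i, D.pr (a1 i) b * D.pr (a2 i) b' = D.pr a (b * b')) ∧
      -- SA is dual to the antipode of B
      (∀ a ∈ D2.A D.toD2S.toD2, ∀ b ∈ D2.B D.toD2S.toD2,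
        D.pr (SA a) b = D.pr a (D.S b)) ∧
      IsWeakHopfOn k R (D2.A D.toD2S.toD2) ΔA (epsAL D) SA) ∧
    IsSemisimpleRing (D2.A D.toD2S.toD2) ∧
    -- the pairing induces a linear bijection of A onto the dual space of B
    (∀ a ∈ D2.A D.toD2S.toD2,
      (∀ b ∈ D2.B D.toD2S.toD2, D.pr a b = 0) → a = 0) ∧
    (∀ φ : (D2.B D.toD2S.toD2) →ₗ[k] k, ∃ a ∈ D2.A D.toD2S.toD2,
      ∀ bb : (D2.B D.toD2S.toD2), D.pr a (bb : R) = φ bb) := by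
  refine ⟨weakHopf_B D, semisimple_B D, ⟨D.ΔA, D.SA, ?_, fun a _ b hb => P_SA a hb, weakHopf_A D⟩,
    semisimple_A D, fun a ha h => ?_, fun φ => ?_⟩
  · intro a _ m a1 a2 hrep b hb b' hb'
    have := ev_ΔA a hb hb'
    rw [hrep, map_sum] at this
    exact this
  · rw [← P_bt_al ha]
    exact Finset.sum_eq_zero fun j _ => by rw [P_pr, h _ (bt_B j), zero_smul]
  · refine ⟨∑ j, φ ⟨D.bt j, bt_B j⟩ • D.al j,
      sum_mem fun j _ => Subalgebra.smul_mem _ (al_A j) _, fun b => ?_⟩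
    have hb : b = ∑ j, D.P (D.al j) b • (⟨D.bt j, bt_B j⟩ : D.cB) := by
      apply Subtype.ext
      simpa using (P_al_bt b.2).symm
    rw [← P_pr]
    conv_rhs => rw [hb]
    simp only [map_sum, map_smul, LinearMap.sum_apply, LinearMap.smul_apply, smul_eq_mul]
    exact Finset.sum_congr rfl fun j _ => mul_comm _ _
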